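/- arXiv:2411.12684 — 3 statements merged into one kernel-verified Lean document; each statement's English description precedes it below -/
import Mathlib

section
/- Let U² := ⟨(1,0,1,1),(1,1,0,2)⟩_ℝ ⊆ (ℝ/ℤ)⁴. Then the set 𝒮₁(U²) has finite symmetric difference with the set { 1/4 + 1/(4(2s + 3)) : s ∈ ℤ, s ≥ 0 }. -/
noncomputable section

abbrev Torus (n : ℕ) : Type := Fin n → AddCircle (1 : ℝ)

def torusProj {n : ℕ} (x : Fin n → ℝ) : Torus n := fun i => (x i : AddCircle (1 : ℝ))

def spanTorus {n k : ℕ} (v : Fin k → Fin n → ℤ) : Set (Torus n) :=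
  {p | ∃ t : Fin k → ℝ, p = torusProj fun i => ∑ j, t j * (v j i : ℝ)}

def IsSubtorus {n : ℕ} (k : ℕ) (S : Set (Torus n)) : Prop :=
  ∃ v : Fin k → Fin n → ℤ,
    LinearIndependent ℝ (fun j : Fin k => fun i : Fin n => (v j i : ℝ)) ∧ S = spanTorus v

def IsProperSub {n : ℕ} (S : Set (Torus n)) : Prop :=
  ¬ S ⊆ ⋃ i : Fin n, {x : Torus n | x i = 0}

def DVal {n : ℕ} (S : Set (Torus n)) : ℝ :=
  sInf ((fun x : Torus n => ⨆ i, dist (x i) ((1 / 2 : ℝ) : AddCircle (1 : ℝ))) '' S)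

def relSpec1 {n : ℕ} (U : Set (Torus n)) : Set ℝ :=
  {d | ∃ T : Set (Torus n), IsSubtorus 1 T ∧ IsProperSub T ∧ T ⊆ U ∧ d = DVal T}

def Spec (k n : ℕ) : Set ℝ :=
  {d | ∃ T : Set (Torus n), IsSubtorus k T ∧ IsProperSub T ∧ d = DVal T}

def progSet (d : ℝ) (α β : ℚ) : Set ℝ :=
  {x | ∃ s : ℕ, x = d + 1 / ((α : ℝ) * s + (β : ℝ))}

def U2 : Set (Torus 4) := spanTorus ![![1, 0, 1, 1], ![1, 1, 0, 2]]

def Mp (m n : ℤ) : ℤ := max (n - m) (max (n + m) (-3 * n - m))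
def Mm (m n : ℤ) : ℤ := max (m - n) (max (-n - m) (3 * n + m))
def Np (m n : ℤ) : ℤ := max (n + 2 * m) (max n (-3 * n - 2 * m))
def Nm (m n : ℤ) : ℤ := max (-n - 2 * m) (max (-n) (3 * n + 2 * m))

/-- Feasibility of the scaled excess `E = 4 d - 1`. -/
def Feas (m n : ℤ) (E : ℝ) : Prop :=
  ∃ w : ℤ, (4 ∣ w - (n - m) ∧ (w : ℝ) ≤ E * (Mp m n : ℤ) ∧ -(w : ℝ) ≤ E * (Mm m n : ℤ)) ∨
    (4 ∣ w - (n + 2 * m) ∧ (w : ℝ) ≤ E * (Np m n : ℤ) ∧ -(w : ℝ) ≤ E * (Nm m n : ℤ))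

/-- The data certifying that `1/q` is the least feasible value. -/
def Cert (m n q : ℤ) : Prop :=
  0 < q ∧ ∃ r s : ℤ, 1 ≤ r ∧ r ≤ 3 ∧ 1 ≤ s ∧ s ≤ 3 ∧ 4 ∣ r - (n - m) ∧ 4 ∣ s - (n + 2 * m) ∧
    Mp m n ≤ r * q ∧ Mm m n ≤ (4 - r) * q ∧ Np m n ≤ s * q ∧ Nm m n ≤ (4 - s) * q ∧
    (Mp m n = r * q ∨ Mm m n = (4 - r) * q ∨ Np m n = s * q ∨ Nm m n = (4 - s) * q)

lemma M_pos (m n : ℤ) (hn : 0 < n) :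
    0 < Mp m n ∧ 0 < Mm m n ∧ 0 < Np m n ∧ 0 < Nm m n := by
  unfold Mp Mm Np Nm
  omega

set_option maxHeartbeats 4000000 in
lemma cert_exists (m n : ℤ) (hn : 0 < n) (hodd : ¬ (2 ∣ n ∧ 2 ∣ m))
    (h1 : ¬ 4 ∣ n - m) (h2 : ¬ 4 ∣ n + 2 * m) : ∃ q, Cert m n q ∧ q % 2 = 1 := by
  have hr : (n - m) % 4 = 1 ∨ (n - m) % 4 = 2 ∨ (n - m) % 4 = 3 := by omega
  have hs : (n + 2 * m) % 4 = 1 ∨ (n + 2 * m) % 4 = 2 ∨ (n + 2 * m) % 4 = 3 := by omega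
  have key : ∀ r s a b : ℤ, (1 ≤ r ∧ r ≤ 3 ∧ 1 ≤ s ∧ s ≤ 3 ∧ 4 ∣ r - (n - m) ∧
      4 ∣ s - (n + 2 * m)) → (0 < max a b ∧ (max a b) % 2 = 1 ∧
    Mp m n ≤ r * max a b ∧ Mm m n ≤ (4 - r) * max a b ∧ Np m n ≤ s * max a b ∧
    Nm m n ≤ (4 - s) * max a b ∧
    (Mp m n = r * max a b ∨ Mm m n = (4 - r) * max a b ∨ Np m n = s * max a b ∨
      Nm m n = (4 - s) * max a b)) →
      ∃ q, Cert m n q ∧ q % 2 = 1 := by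
    rintro r s a b ⟨h1, h2, h3, h4, h5, h6⟩ ⟨g0, g1, g⟩
    exact ⟨max a b, ⟨g0, r, s, h1, h2, h3, h4, h5, h6, g⟩, g1⟩
  have hreg : (Mp m n = n + m ∧ Mm m n = 3 * n + m ∧ Np m n = n + 2 * m ∧
        Nm m n = 3 * n + 2 * m ∧ 0 ≤ m) ∨
      (Mp m n = n - m ∧ Mm m n = 3 * n + m ∧ Np m n = n ∧
        Nm m n = 3 * n + 2 * m ∧ m < 0 ∧ -n ≤ m) ∨
      (Mp m n = n - m ∧ Mm m n = 3 * n + m ∧ Np m n = n ∧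
        Nm m n = -n - 2 * m ∧ m < -n ∧ -2 * n ≤ m) ∨
      (Mp m n = n - m ∧ Mm m n = -n - m ∧ Np m n = -3 * n - 2 * m ∧
        Nm m n = -n - 2 * m ∧ m < -2 * n) := by
    unfold Mp Mm Np Nm
    rcases lt_or_ge m 0 with h | h
    · rcases lt_or_ge m (-n) with h' | h'
      · rcases lt_or_ge m (-2 * n) with h'' | h''
        · right; right; right; refine ⟨?_, ?_, ?_, ?_, ?_⟩ <;> omega
        · right; right; left; refine ⟨?_, ?_, ?_, ?_, ?_, ?_⟩ <;> omega
      · right; left; refine ⟨?_, ?_, ?_, ?_, ?_, ?_⟩ <;> omega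
    · left; refine ⟨?_, ?_, ?_, ?_, ?_⟩ <;> omega
  generalize Mp m n = A at *
  generalize Mm m n = B at *
  generalize Np m n = C at *
  generalize Nm m n = D at *
  rcases hr with hr | hr | hr <;> rcases hs with hs | hs | hs
  · apply key 1 1 A C (by omega)
    rcases hreg with h | h | h | h <;> (refine ⟨?_, ?_, ?_, ?_, ?_, ?_, ?_⟩ <;> omega)
  · apply key 1 2 A (max C D / 2) (by omega)
    rcases hreg with h | h | h | h <;> (refine ⟨?_, ?_, ?_, ?_, ?_, ?_, ?_⟩ <;> omega)
  · apply key 1 3 A D (by omega)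
    rcases hreg with h | h | h | h <;> (refine ⟨?_, ?_, ?_, ?_, ?_, ?_, ?_⟩ <;> omega)
  · apply key 2 1 (max A B / 2) C (by omega)
    rcases hreg with h | h | h | h <;> (refine ⟨?_, ?_, ?_, ?_, ?_, ?_, ?_⟩ <;> omega)
  · exfalso; omega
  · apply key 2 3 (max A B / 2) D (by omega)
    rcases hreg with h | h | h | h <;> (refine ⟨?_, ?_, ?_, ?_, ?_, ?_, ?_⟩ <;> omega)
  · apply key 3 1 B C (by omega)
    rcases hreg with h | h | h | h <;> (refine ⟨?_, ?_, ?_, ?_, ?_, ?_, ?_⟩ <;> omega)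
  · apply key 3 2 B (max C D / 2) (by omega)
    rcases hreg with h | h | h | h <;> (refine ⟨?_, ?_, ?_, ?_, ?_, ?_, ?_⟩ <;> omega)
  · apply key 3 3 B D (by omega)
    rcases hreg with h | h | h | h <;> (refine ⟨?_, ?_, ?_, ?_, ?_, ?_, ?_⟩ <;> omega)

lemma nonneg_of_bounds (w P Q : ℤ) (E : ℝ) (hP : 0 < P) (hQ : 0 < Q)
    (h1 : (w : ℝ) ≤ E * P) (h2 : -(w : ℝ) ≤ E * Q) : 0 ≤ E := by
  have : (0 : ℝ) < P + Q := by exact_mod_cast add_pos hP hQ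
  by_contra h
  push Not at h
  nlinarith

lemma feas_nonneg (m n : ℤ) (hn : 0 < n) (E : ℝ) (h : Feas m n E) : 0 ≤ E := by
  obtain ⟨p1, p2, p3, p4⟩ := M_pos m n hn
  obtain ⟨w, ⟨_, h1, h2⟩ | ⟨_, h1, h2⟩⟩ := h
  · exact nonneg_of_bounds w _ _ E p1 p2 h1 h2
  · exact nonneg_of_bounds w _ _ E p3 p4 h1 h2

lemma lower_aux (w r P Q q k : ℤ) (E : ℝ) (hP : 0 < P) (hQ : 0 < Q) (hq : 0 < q)
    (hr1 : 1 ≤ r) (hr3 : r ≤ 3) (hd : 4 ∣ r - k) (hw : 4 ∣ w - k)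
    (hPq : P ≤ r * q) (hQq : Q ≤ (4 - r) * q)
    (h1 : (w : ℝ) ≤ E * P) (h2 : -(w : ℝ) ≤ E * Q) : 1 / (q : ℝ) ≤ E := by
  have hE := nonneg_of_bounds w P Q E hP hQ h1 h2
  have hq' : (0 : ℝ) < q := by exact_mod_cast hq
  rw [div_le_iff₀ hq']
  have hc : r ≤ w ∨ w ≤ r - 4 := by omega
  have hr1' : (1 : ℝ) ≤ r := by exact_mod_cast hr1
  have hr3' : (r : ℝ) ≤ 3 := by exact_mod_cast hr3
  rcases hc with hc | hc
  · have a1 : (P : ℝ) ≤ r * q := by exact_mod_cast hPq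
    have a2 : (r : ℝ) ≤ w := by exact_mod_cast hc
    have a3 := mul_le_mul_of_nonneg_left a1 hE
    have : (r : ℝ) * 1 ≤ r * (E * q) := by nlinarith
    exact le_of_mul_le_mul_left this (by linarith)
  · have a1 : (Q : ℝ) ≤ (4 - r) * q := by exact_mod_cast hQq
    have a2 : (w : ℝ) ≤ r - 4 := by exact_mod_cast hc
    have a3 := mul_le_mul_of_nonneg_left a1 hE
    have : (4 - r : ℝ) * 1 ≤ (4 - r) * (E * q) := by nlinarith
    exact le_of_mul_le_mul_left this (by linarith)

lemma cert_lower (m n q : ℤ) (hn : 0 < n) (hc : Cert m n q) (E : ℝ) (h : Feas m n E) :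
    1 / (q : ℝ) ≤ E := by
  obtain ⟨p1, p2, p3, p4⟩ := M_pos m n hn
  obtain ⟨hq, r, s, c1, c2, c3, c4, c5, c6, c7, c8, c9, c10, _⟩ := hc
  obtain ⟨w, ⟨hd, h1, h2⟩ | ⟨hd, h1, h2⟩⟩ := h
  · exact lower_aux w r _ _ q _ E p1 p2 hq c1 c2 c5 hd c7 c8 h1 h2
  · exact lower_aux w s _ _ q _ E p3 p4 hq c3 c4 c6 hd c9 c10 h1 h2

lemma cert_feas (m n q : ℤ) (hn : 0 < n) (hc : Cert m n q) : Feas m n (1 / (q : ℝ)) := by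
  obtain ⟨p1, p2, p3, p4⟩ := M_pos m n hn
  obtain ⟨hq, r, s, c1, c2, c3, c4, c5, c6, c7, c8, c9, c10, hh⟩ := hc
  have hq' : (0 : ℝ) < q := by exact_mod_cast hq
  have conv : ∀ w P : ℤ, w * q ≤ P → (w : ℝ) ≤ 1 / (q : ℝ) * P := by
    intro w P h
    rw [one_div, inv_mul_eq_div, le_div_iff₀ hq']
    exact_mod_cast h
  have conv' : ∀ w P : ℤ, (-w) * q ≤ P → -(w : ℝ) ≤ 1 / (q : ℝ) * P := by
    intro w P h
    have := conv (-w) P h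
    push_cast at this
    exact this
  rcases hh with h | h | h | h
  · exact ⟨r, Or.inl ⟨c5, conv _ _ (by rw [h]), conv' _ _ (by nlinarith)⟩⟩
  · exact ⟨r - 4, Or.inl ⟨by omega, conv _ _ (by nlinarith), conv' _ _ (by rw [h]; ring_nf; rfl)⟩⟩
  · exact ⟨s, Or.inr ⟨c6, conv _ _ (by rw [h]), conv' _ _ (by nlinarith)⟩⟩
  · exact ⟨s - 4, Or.inr ⟨by omega, conv _ _ (by nlinarith), conv' _ _ (by rw [h]; ring_nf; rfl)⟩⟩

lemma feas_zero (m n : ℤ) (h : 4 ∣ n - m ∨ 4 ∣ n + 2 * m) : Feas m n 0 := by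
  refine ⟨0, ?_⟩
  rcases h with h | h
  · left; exact ⟨by omega, by simp, by simp⟩
  · right; exact ⟨by omega, by simp, by simp⟩

/-- Lower-bound geometry. -/
lemma geom_lower (m n : ℤ) (p q d : ℝ) (c z : ℤ) (hd : d < 1 / 2)
    (hc : ((n : ℝ) - m) / 2 + n * p - m * q = c) (hp : p ≤ d) (_hq1 : -d ≤ q) (hq : q ≤ d)
    (hpq : 1 / 2 - d ≤ p + q) (hz1 : -d ≤ p + 2 * q + z) (hz2 : p + 2 * q + z ≤ d) :
    Feas m n (4 * d - 1) := by
  have z1 : z < 1 := by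
    by_contra h
    have : (1 : ℝ) ≤ z := by exact_mod_cast not_lt.mp h
    linarith
  have z2 : -2 < z := by
    by_contra h
    have : (z : ℝ) ≤ -2 := by exact_mod_cast not_lt.mp h
    linarith
  have hz : z = 0 ∨ z = -1 := by omega
  rcases hz with rfl | rfl
  · refine ⟨4 * c - 3 * n + 2 * m, Or.inr ⟨by omega, ?_, ?_⟩⟩
    · have b1 : n + 2 * m ≤ Np m n := by unfold Np; omega
      have b2 : n ≤ Np m n := by unfold Np; omega
      have b3 : -3 * n - 2 * m ≤ Np m n := by unfold Np; omega
      generalize Np m n = P at *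
      have b1 : (n + 2 * m : ℝ) ≤ P := by exact_mod_cast b1
      have b2 : (n : ℝ) ≤ P := by exact_mod_cast b2
      have b3 : (-3 * n - 2 * m : ℝ) ≤ P := by exact_mod_cast b3
      push_cast at *
      nlinarith [mul_nonneg (sub_nonneg.2 hp) (sub_nonneg.2 b3),
        mul_nonneg (sub_nonneg.2 hpq) (sub_nonneg.2 b2),
        mul_nonneg (sub_nonneg.2 hz2) (sub_nonneg.2 b1)]
    · have b1 : -n - 2 * m ≤ Nm m n := by unfold Nm; omega
      have b2 : -n ≤ Nm m n := by unfold Nm; omega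
      have b3 : 3 * n + 2 * m ≤ Nm m n := by unfold Nm; omega
      generalize Nm m n = P at *
      have b1 : (-n - 2 * m : ℝ) ≤ P := by exact_mod_cast b1
      have b2 : (-n : ℝ) ≤ P := by exact_mod_cast b2
      have b3 : (3 * n + 2 * m : ℝ) ≤ P := by exact_mod_cast b3
      push_cast at *
      nlinarith [mul_nonneg (sub_nonneg.2 hp) (sub_nonneg.2 b3),
        mul_nonneg (sub_nonneg.2 hpq) (sub_nonneg.2 b2),
        mul_nonneg (sub_nonneg.2 hz2) (sub_nonneg.2 b1)]
  · refine ⟨4 * c - 3 * (n - m), Or.inl ⟨by omega, ?_, ?_⟩⟩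
    · have b1 : n - m ≤ Mp m n := by unfold Mp; omega
      have b2 : n + m ≤ Mp m n := by unfold Mp; omega
      have b3 : -3 * n - m ≤ Mp m n := by unfold Mp; omega
      generalize Mp m n = P at *
      have b1 : (n - m : ℝ) ≤ P := by exact_mod_cast b1
      have b2 : (n + m : ℝ) ≤ P := by exact_mod_cast b2
      have b3 : (-3 * n - m : ℝ) ≤ P := by exact_mod_cast b3
      push_cast at *
      nlinarith [mul_nonneg (sub_nonneg.2 hp) (sub_nonneg.2 b3),
        mul_nonneg (sub_nonneg.2 hq) (sub_nonneg.2 b2),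
        mul_nonneg (sub_nonneg.2 hz1) (sub_nonneg.2 b1)]
    · have b1 : m - n ≤ Mm m n := by unfold Mm; omega
      have b2 : -n - m ≤ Mm m n := by unfold Mm; omega
      have b3 : 3 * n + m ≤ Mm m n := by unfold Mm; omega
      generalize Mm m n = P at *
      have b1 : (m - n : ℝ) ≤ P := by exact_mod_cast b1
      have b2 : (-n - m : ℝ) ≤ P := by exact_mod_cast b2
      have b3 : (3 * n + m : ℝ) ≤ P := by exact_mod_cast b3
      push_cast at *
      nlinarith [mul_nonneg (sub_nonneg.2 hp) (sub_nonneg.2 b3),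
        mul_nonneg (sub_nonneg.2 hq) (sub_nonneg.2 b2),
        mul_nonneg (sub_nonneg.2 hz1) (sub_nonneg.2 b1)]

lemma line_lower (m n : ℤ) (t d : ℝ) (hd : d < 1 / 2) (a0 a1 a2 a3 : ℤ)
    (h0 : |t * (m + n) - 1 / 2 - a0| ≤ d) (h1 : |t * n - 1 / 2 - a1| ≤ d)
    (h2 : |t * m - 1 / 2 - a2| ≤ d) (h3 : |t * (m + 2 * n) - 1 / 2 - a3| ≤ d) :
    Feas m n (4 * d - 1) := by
  rw [abs_le] at *
  obtain ⟨h01, h02⟩ := h0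
  obtain ⟨h11, h12⟩ := h1
  obtain ⟨h21, h22⟩ := h2
  obtain ⟨h31, h32⟩ := h3
  have z1 : a1 + a2 - a0 < 1 := by
    by_contra h
    have : (1 : ℝ) ≤ a1 + a2 - a0 := by exact_mod_cast not_lt.mp h
    linarith
  have z2 : -2 < a1 + a2 - a0 := by
    by_contra h
    have : (a1 + a2 - a0 : ℝ) ≤ -2 := by exact_mod_cast not_lt.mp h
    linarith
  have hz : a1 + a2 - a0 = 0 ∨ a1 + a2 - a0 = -1 := by omega
  rcases hz with hz | hz
  · have hz' : (a1 + a2 - a0 : ℝ) = 0 := by exact_mod_cast hz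
    apply geom_lower m n (-(t * m - 1 / 2 - a2)) (-(t * n - 1 / 2 - a1)) d
      (n - m + n * a2 - m * a1) (-(a2 + 2 * a1 + 1 - a3)) hd
    all_goals first | (push_cast; ring1) | (push_cast; linarith)
  · have hz' : (a1 + a2 - a0 : ℝ) = -1 := by exact_mod_cast hz
    apply geom_lower m n ((t * m - 1 / 2 - a2)) ((t * n - 1 / 2 - a1)) d
      (-(n * a2 - m * a1)) ((a2 + 2 * a1 + 1 - a3)) hd
    all_goals first | (push_cast; ring1) | (push_cast; linarith)

lemma scale_aux (w P Q : ℤ) (E : ℝ) (hP : 0 < P) (hQ : 0 < Q)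
    (h1 : (w : ℝ) ≤ E * P) (h2 : -(w : ℝ) ≤ E * Q) :
    ∃ s : ℝ, 0 ≤ s ∧ s ≤ E ∧ ((w : ℝ) = s * P ∨ (w : ℝ) = - (s * Q)) := by
  have hP' : (0 : ℝ) < P := by exact_mod_cast hP
  have hQ' : (0 : ℝ) < Q := by exact_mod_cast hQ
  rcases le_total (0 : ℝ) w with h | h
  · refine ⟨w / P, by positivity, ?_, Or.inl (by field_simp)⟩
    rwa [div_le_iff₀ hP']
  · refine ⟨-w / Q, div_nonneg (by linarith) hQ'.le, ?_, Or.inr (by field_simp)⟩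
    rwa [div_le_iff₀ hQ']

lemma max3 (a b c : ℤ) : max a (max b c) = a ∨ max a (max b c) = b ∨ max a (max b c) = c := by
  omega

lemma geom_upper (m n : ℤ) (hn : 0 < n) (E : ℝ) (hE1 : E ≤ 1) (h : Feas m n E) :
    ∃ (p q : ℝ) (c : ℤ), ((n : ℝ) - m) / 2 + n * p - m * q = c ∧
      |p| ≤ 1 / 4 + E / 4 ∧ |q| ≤ 1 / 4 + E / 4 ∧ |p + q - 1 / 2| ≤ 1 / 4 + E / 4 ∧
      ∃ z : ℤ, |p + 2 * q - z| ≤ 1 / 4 + E / 4 := by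
  obtain ⟨p1, p2, p3, p4⟩ := M_pos m n hn
  obtain ⟨w, ⟨⟨k, hk⟩, h1, h2⟩ | ⟨⟨k, hk⟩, h1, h2⟩⟩ := h
  · obtain ⟨s, hs0, hsE, hs⟩ := scale_aux w _ _ E p1 p2 h1 h2
    have : ∃ U V : ℝ, U ≤ E ∧ V ≤ E ∧ -E ≤ U + 2 * V ∧ n * U - m * V = w := by
      rcases hs with hs | hs
      · unfold Mp at hs
        rcases max3 (n - m) (n + m) (-3 * n - m) with e | e | e <;> rw [e] at hs <;>
          push_cast at hs
        · exact ⟨s, s, by linarith, by linarith, by linarith, by linarith⟩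
        · exact ⟨s, -s, by linarith, by linarith, by linarith, by linarith⟩
        · exact ⟨-3 * s, s, by linarith, by linarith, by linarith, by linarith⟩
      · unfold Mm at hs
        rcases max3 (m - n) (-n - m) (3 * n + m) with e | e | e <;> rw [e] at hs <;>
          push_cast at hs
        · exact ⟨s, s, by linarith, by linarith, by linarith, by linarith⟩
        · exact ⟨s, -s, by linarith, by linarith, by linarith, by linarith⟩
        · exact ⟨-3 * s, s, by linarith, by linarith, by linarith, by linarith⟩
    obtain ⟨U, V, hU, hV, hUV, hw⟩ := this
    have hk' : (w : ℝ) - (n - m) = 4 * k := by exact_mod_cast hk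
    refine ⟨1 / 4 + U / 4, 1 / 4 + V / 4, k + (n - m), ?_, ?_, ?_, ?_, 1, ?_⟩
    · push_cast; linarith
    all_goals rw [abs_le]; push_cast; constructor <;> linarith
  · obtain ⟨s, hs0, hsE, hs⟩ := scale_aux w _ _ E p3 p4 h1 h2
    have : ∃ U V : ℝ, U ≤ E ∧ -E ≤ U + V ∧ U + 2 * V ≤ E ∧ n * U - m * V = w := by
      rcases hs with hs | hs
      · unfold Np at hs
        rcases max3 (n + 2 * m) n (-3 * n - 2 * m) with e | e | e <;> rw [e] at hs <;>
          push_cast at hs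
        · exact ⟨s, -2 * s, by linarith, by linarith, by linarith, by linarith⟩
        · exact ⟨s, 0, by linarith, by linarith, by linarith, by linarith⟩
        · exact ⟨-3 * s, 2 * s, by linarith, by linarith, by linarith, by linarith⟩
      · unfold Nm at hs
        rcases max3 (-n - 2 * m) (-n) (3 * n + 2 * m) with e | e | e <;> rw [e] at hs <;>
          push_cast at hs
        · exact ⟨s, -2 * s, by linarith, by linarith, by linarith, by linarith⟩
        · exact ⟨s, 0, by linarith, by linarith, by linarith, by linarith⟩
        · exact ⟨-3 * s, 2 * s, by linarith, by linarith, by linarith, by linarith⟩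
    obtain ⟨U, V, hU, hV, hUV, hw⟩ := this
    have hk' : (w : ℝ) - (n + 2 * m) = 4 * k := by exact_mod_cast hk
    refine ⟨1 / 4 + U / 4, V / 4, k + n, ?_, ?_, ?_, ?_, 0, ?_⟩
    · push_cast; linarith
    all_goals rw [abs_le]; push_cast; constructor <;> linarith

lemma line_upper (m n : ℤ) (hn : 0 < n) (hco : IsCoprime m n) (E : ℝ) (hE1 : E ≤ 1)
    (h : Feas m n E) : ∃ (t : ℝ) (a0 a1 a2 a3 : ℤ),
    |t * (m + n) - 1 / 2 - a0| ≤ 1 / 4 + E / 4 ∧ |t * n - 1 / 2 - a1| ≤ 1 / 4 + E / 4 ∧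
    |t * m - 1 / 2 - a2| ≤ 1 / 4 + E / 4 ∧ |t * (m + 2 * n) - 1 / 2 - a3| ≤ 1 / 4 + E / 4 := by
  obtain ⟨p, q, c, hc, hp, hq, hpq, z, hz⟩ := geom_upper m n hn E hE1 h
  obtain ⟨a, b, hab⟩ := hco
  have hab' : (a : ℝ) * m + b * n = 1 := by exact_mod_cast hab
  have hn' : (n : ℝ) ≠ 0 := by exact_mod_cast hn.ne'
  have hy : (1 / 2 + q + a * c) / n * n = 1 / 2 + q + a * c := by field_simp
  have hx : (1 / 2 + q + a * c) / n * m = 1 / 2 + p - b * c := by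
    rw [div_mul_eq_mul_div, div_eq_iff hn']
    have : (c : ℝ) * (a * m + b * n) = c := by rw [hab', mul_one]
    linarith
  refine ⟨(1 / 2 + q + a * c) / n, a * c - b * c + 1 - 0, a * c, -(b * c),
    2 * (a * c) - b * c + 1 + z, ?_, ?_, ?_, ?_⟩
  · rw [mul_add, hx, hy]; push_cast; convert hpq using 2; ring
  · rw [hy]; push_cast; convert hq using 2; ring
  · rw [hx]; push_cast; convert hp using 2; ring
  · rw [mul_add, mul_left_comm, hx, hy]; push_cast; convert hz using 2; ring

lemma dist_half (x d : ℝ) : dist (x : AddCircle (1 : ℝ)) ((1 / 2 : ℝ) : AddCircle (1 : ℝ)) ≤ d ↔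
    ∃ a : ℤ, |x - 1 / 2 - a| ≤ d := by
  rw [dist_eq_norm, ← AddCircle.coe_sub]
  have : ‖((x - 1 / 2 : ℝ) : AddCircle (1 : ℝ))‖ = |x - 1 / 2 - round (x - 1 / 2)| :=
    UnitAddCircle.norm_eq
  rw [this]
  constructor
  · intro h; exact ⟨_, h⟩
  · rintro ⟨a, ha⟩; exact (round_le _ a).trans ha

/-- The one-dimensional subtorus of `U2` in direction `(m, n)`. -/
def vec (m n : ℤ) : Fin 1 → Fin 4 → ℤ := fun _ => ![m + n, n, m, m + 2 * n]

def L (m n : ℤ) : Set (Torus 4) := spanTorus (vec m n)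

lemma sup_le_iff' (f : Fin 4 → ℝ) (d : ℝ) :
    (⨆ i, f i) ≤ d ↔ f 0 ≤ d ∧ f 1 ≤ d ∧ f 2 ≤ d ∧ f 3 ≤ d := by
  rw [ciSup_le_iff (Set.finite_range f).bddAbove]
  constructor
  · intro h; exact ⟨h 0, h 1, h 2, h 3⟩
  · rintro ⟨h0, h1, h2, h3⟩ i
    fin_cases i <;> assumption

lemma DVal_L (m n : ℤ) (hn : 0 < n) (hco : IsCoprime m n) (E : ℝ) (hE1 : E ≤ 1)
    (h : Feas m n E) (hmin : ∀ E', Feas m n E' → E ≤ E') : DVal (L m n) = 1 / 4 + E / 4 := by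
  have low : ∀ t : Fin 1 → ℝ, 1 / 4 + E / 4 ≤ ⨆ i, dist ((torusProj fun i =>
      ∑ j, t j * (vec m n j i : ℝ)) i) ((1 / 2 : ℝ) : AddCircle (1 : ℝ)) := by
    intro t
    set d := ⨆ i, dist ((torusProj fun i =>
      ∑ j, t j * (vec m n j i : ℝ)) i) ((1 / 2 : ℝ) : AddCircle (1 : ℝ)) with hd
    by_contra hlt
    push Not at hlt
    have hle := hd.ge
    rw [sup_le_iff'] at hle
    simp only [torusProj, dist_half] at hle
    obtain ⟨⟨a0, h0⟩, ⟨a1, h1⟩, ⟨a2, h2⟩, ⟨a3, h3⟩⟩ := hle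
    simp [vec] at h0 h1 h2 h3
    have := hmin _ (line_lower m n (t 0) d (by linarith) a0 a1 a2 a3
      (by simpa using h0) (by simpa using h1) (by simpa using h2) (by simpa using h3))
    linarith
  have : IsLeast ((fun x : Torus 4 => ⨆ i, dist (x i) ((1 / 2 : ℝ) : AddCircle (1 : ℝ))) '' (L m n))
      (1 / 4 + E / 4) := by
    constructor
    · obtain ⟨t, a0, a1, a2, a3, h0, h1, h2, h3⟩ := line_upper m n hn hco E hE1 h
      refine ⟨_, ⟨fun _ => t, rfl⟩, le_antisymm ?_ (low _)⟩
      simp only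
      rw [sup_le_iff']
      simp only [torusProj, dist_half]
      refine ⟨⟨a0, ?_⟩, ⟨a1, ?_⟩, ⟨a2, ?_⟩, ⟨a3, ?_⟩⟩
      · simpa [vec] using h0
      · simpa [vec] using h1
      · simpa [vec] using h2
      · simpa [vec] using h3
    · rintro _ ⟨x, ⟨t, rfl⟩, rfl⟩
      exact low t
  exact this.csInf_eq

lemma DVal_cert (m n q : ℤ) (hn : 0 < n) (hco : IsCoprime m n) (hc : Cert m n q) :
    DVal (L m n) = 1 / 4 + 1 / (4 * (q : ℝ)) := by
  have hq : (1 : ℝ) ≤ q := by exact_mod_cast hc.1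
  rw [DVal_L m n hn hco (1 / q) (by rw [div_le_one (by linarith)]; exact hq)
    (cert_feas m n q hn hc) (cert_lower m n q hn hc)]
  field_simp

lemma DVal_cases (m n : ℤ) (hn : 0 < n) (hco : IsCoprime m n) :
    DVal (L m n) = 1 / 4 ∨ ∃ q : ℤ, 0 < q ∧ q % 2 = 1 ∧ DVal (L m n) = 1 / 4 + 1 / (4 * (q : ℝ)) := by
  by_cases h0 : 4 ∣ n - m ∨ 4 ∣ n + 2 * m
  · left
    rw [DVal_L m n hn hco 0 zero_le_one (feas_zero m n h0) (feas_nonneg m n hn)]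
    norm_num
  · right
    push Not at h0
    obtain ⟨q, hc, hq⟩ := cert_exists m n hn (by
      rintro ⟨h2, h2'⟩
      have := hco.isUnit_of_dvd' h2' h2
      rw [Int.isUnit_iff] at this
      omega) h0.1 h0.2
    exact ⟨q, hc.1, hq, DVal_cert m n q hn hco hc⟩

lemma circle_zero (c : ℤ) (h : ∀ t : ℝ, ((t * c : ℝ) : AddCircle (1 : ℝ)) = 0) : c = 0 := by
  by_contra hc
  have hc' : (c : ℝ) ≠ 0 := by exact_mod_cast hc
  have := h (1 / 2 / c)
  rw [div_mul_cancel₀ _ hc', AddCircle.coe_eq_zero_iff] at this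
  obtain ⟨k, hk⟩ := this
  have hk : (k : ℝ) * 2 = 1 := by
    rw [zsmul_eq_mul] at hk; linarith
  have : k * 2 = 1 := by exact_mod_cast hk
  omega

lemma U2_char (x : Torus 4) (hx : x ∈ U2) : x 0 - x 1 - x 2 = 0 ∧ x 3 - x 2 - x 1 - x 1 = 0 := by
  obtain ⟨t, rfl⟩ := hx
  simp only [torusProj, ← AddCircle.coe_sub]
  constructor
  · rw [AddCircle.coe_eq_zero_iff]; exact ⟨0, by simp [Fin.sum_univ_two]⟩
  · rw [AddCircle.coe_eq_zero_iff]; exact ⟨0, by simp [Fin.sum_univ_two]; ring⟩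

lemma L_scale (m n g : ℤ) (hg : g ≠ 0) : L (g * m) (g * n) = L m n := by
  have hg' : (g : ℝ) ≠ 0 := by exact_mod_cast hg
  ext x
  constructor
  · rintro ⟨t, rfl⟩
    refine ⟨fun j => t j * g, ?_⟩
    congr 1
    funext i
    fin_cases i <;> simp [vec] <;> ring
  · rintro ⟨t, rfl⟩
    refine ⟨fun j => t j / g, ?_⟩
    congr 1
    funext i
    fin_cases i <;> simp [vec] <;> field_simp

lemma exists_L (T : Set (Torus 4)) (h1 : IsSubtorus 1 T) (h2 : IsProperSub T) (h3 : T ⊆ U2) :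
    ∃ m n : ℤ, 0 < n ∧ IsCoprime m n ∧ T = L m n := by
  obtain ⟨v, _, rfl⟩ := h1
  have hv : ∀ t : ℝ, (torusProj fun i => t * (v 0 i : ℝ)) ∈ U2 := by
    intro t
    apply h3
    exact ⟨fun _ => t, by simp⟩
  have e0 : v 0 0 - v 0 1 - v 0 2 = 0 := by
    apply circle_zero
    intro t
    have := (U2_char _ (hv t)).1
    simp only [torusProj, ← AddCircle.coe_sub] at this
    rw [← this]; congr 1; push_cast; ring
  have e3 : v 0 3 - v 0 2 - v 0 1 - v 0 1 = 0 := by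
    apply circle_zero
    intro t
    have := (U2_char _ (hv t)).2
    simp only [torusProj, ← AddCircle.coe_sub] at this
    rw [← this]; congr 1; push_cast; ring
  have hL : spanTorus v = L (v 0 2) (v 0 1) := by
    unfold L
    congr 1
    funext j i
    obtain rfl : j = 0 := Subsingleton.elim _ _
    fin_cases i <;> simp [vec] <;> omega
  rw [hL] at h2 ⊢
  generalize v 0 2 = m at *
  generalize v 0 1 = n at *
  have hn : n ≠ 0 := by
    rintro rfl
    apply h2
    rintro x ⟨t, rfl⟩
    rw [Set.mem_iUnion]
    exact ⟨1, by simp [torusProj, vec]⟩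
  have hg : (0 : ℤ) < Int.gcd m n := by
    exact_mod_cast Int.gcd_pos_of_ne_zero_right m hn
  obtain ⟨a, ha⟩ := Int.gcd_dvd_left (a := m) (b := n)
  obtain ⟨b, hb⟩ := Int.gcd_dvd_right (a := m) (b := n)
  have hco : IsCoprime a b := by
    obtain ⟨x, y, hxy⟩ : ∃ x y : ℤ, m * x + n * y = Int.gcd m n :=
      ⟨_, _, (Int.gcd_eq_gcd_ab m n).symm⟩
    refine ⟨x, y, ?_⟩
    apply mul_left_cancel₀ hg.ne'
    generalize (Int.gcd m n : ℤ) = g at *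
    subst ha hb
    linarith
  generalize (Int.gcd m n : ℤ) = g at *
  have hb0 : b ≠ 0 := by rintro rfl; simp at hb; exact hn hb
  rcases lt_or_gt_of_ne hb0 with h | h
  · refine ⟨-a, -b, by omega, hco.neg_neg, ?_⟩
    rw [← L_scale (-a) (-b) (-g) (by omega), neg_mul_neg, neg_mul_neg, ← ha, ← hb]
  · refine ⟨a, b, h, hco, ?_⟩
    rw [← L_scale a b g (by omega), ← ha, ← hb]

lemma L_mem (m n : ℤ) (hm : 0 < m) (hn : 0 < n) : DVal (L m n) ∈ relSpec1 U2 := by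
  have hm' : (0 : ℝ) < m := by exact_mod_cast hm
  have hn' : (0 : ℝ) < n := by exact_mod_cast hn
  refine ⟨L m n, ⟨vec m n, ?_, rfl⟩, ?_, ?_, rfl⟩
  · rw [linearIndependent_unique_iff]
    intro h
    have := congrFun h 1
    simp [vec] at this
    omega
  · intro h
    have hmem : (torusProj fun i => ∑ j : Fin 1, (1 / (2 * (m + 2 * n)) : ℝ) * (vec m n j i : ℝ))
      ∈ L m n := ⟨fun _ => 1 / (2 * (m + 2 * n)), rfl⟩
    have := h hmem
    rw [Set.mem_iUnion] at this
    obtain ⟨i, hi⟩ := this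
    have key : ∀ y : ℝ, 0 < y → y < 2 * (m + 2 * n) →
        ((1 / (2 * (m + 2 * n)) * y : ℝ) : AddCircle (1 : ℝ)) ≠ 0 := by
      intro y hy0 hy1 hy
      rw [AddCircle.coe_eq_zero_iff] at hy
      obtain ⟨k, hk⟩ := hy
      rw [zsmul_eq_mul, mul_one] at hk
      have k0 : (0 : ℝ) < k := by rw [hk]; positivity
      have k1 : (k : ℝ) < 1 := by
        rw [hk, one_div, inv_mul_eq_div, div_lt_one (by positivity)]; exact hy1
      have k0 : 0 < k := by exact_mod_cast k0
      have k1 : k < 1 := by exact_mod_cast k1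
      omega
    simp only [torusProj, Set.mem_ofPred_eq, Fin.sum_univ_one] at hi
    refine key _ ?_ ?_ hi
    · fin_cases i <;> simp [vec] <;> linarith
    · fin_cases i <;> simp [vec] <;> linarith
  · rintro x ⟨t, rfl⟩
    refine ⟨![t 0 * m, t 0 * n], ?_⟩
    congr 1
    funext i
    fin_cases i <;> simp [vec, Fin.sum_univ_two] <;> ring

lemma cert_one (r : ℤ) (hr : 2 ≤ r) : Cert (2 * r) 1 (4 * r + 1) := by
  refine ⟨by omega, if r % 2 = 0 then 1 else 3, 1, ?_⟩
  unfold Mp Mm Np Nm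
  split_ifs <;> (refine ⟨?_, ?_, ?_, ?_, ?_, ?_, ?_, ?_, ?_, ?_, ?_⟩ <;> omega)

lemma cert_three (r : ℤ) (hr : 0 ≤ r) : Cert (4 * r + 3) 8 (4 * r + 15) := by
  refine ⟨by omega, 1, 2, ?_⟩
  unfold Mp Mm Np Nm
  refine ⟨?_, ?_, ?_, ?_, ?_, ?_, ?_, ?_, ?_, ?_, ?_⟩ <;> omega

/-- `𝒮₁(U²)` has finite symmetric difference with `1/4 + 1/4Prog(2,3)`. -/
theorem stmt16 :
    (symmDiff (relSpec1 U2)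
      {x : ℝ | ∃ s : ℕ, x = 1/4 + 1/(4 * (2 * (s : ℝ) + 3))}).Finite := by
  have hfin : ({1 / 4, 1 / 2} ∪ (fun s : ℕ => (1 / 4 + 1 / (4 * (2 * (s : ℝ) + 3)) : ℝ)) ''
      (Set.Iio 6)).Finite :=
    (Set.toFinite _).union ((Set.finite_Iio 6).image _)
  refine hfin.subset ?_
  rintro x (⟨⟨T, h1, h2, h3, rfl⟩, hx⟩ | ⟨⟨s, rfl⟩, hx⟩)
  · left
    obtain ⟨m, n, hn, hco, rfl⟩ := exists_L T h1 h2 h3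
    rcases DVal_cases m n hn hco with h | ⟨q, hq0, hq1, h⟩
    · left; exact h
    · by_cases hq : q = 1
      · right
        rw [h, hq]
        norm_num
      · exfalso
        apply hx
        obtain ⟨s, hs⟩ := Int.eq_ofNat_of_zero_le (a := (q - 3) / 2) (by omega)
        refine ⟨s, ?_⟩
        have : q = 2 * (s : ℤ) + 3 := by omega
        rw [h, this]
        push_cast
        rfl
  · right
    by_contra hs
    have hs6 : 6 ≤ s := by
      by_contra hlt
      exact hs ⟨s, by simpa using hlt, rfl⟩
    apply hx
    rcases Nat.even_or_odd' s with ⟨k, hk | hk⟩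
    · have := L_mem (4 * ((k : ℤ) - 3) + 3) 8 (by omega) (by omega)
      rw [DVal_cert _ _ _ (by omega) (by
        refine ⟨3 - 4 * ((k : ℤ) - 3), 2 * ((k : ℤ) - 3) ^ 2 - 1, ?_⟩; ring)
        (cert_three ((k : ℤ) - 3) (by omega))] at this
      convert this using 4
      rw [hk]; push_cast; ring
    · have := L_mem (2 * ((k : ℤ) + 1)) 1 (by omega) (by omega)
      rw [DVal_cert _ _ _ (by omega) isCoprime_one_right
        (cert_one ((k : ℤ) + 1) (by omega))] at this
      convert this using 4
      rw [hk]; push_cast; ring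
end
end

section
/- For every natural number s ≥ 1, the 1-dimensional subtorus T := ⟨(8, 4s+3, 4s+11, 4s+19)⟩_ℝ of (ℝ/ℤ)⁴ satisfies D(T) = 1/4 + 1/(16s + 60). -/
noncomputable section

lemma dist_half_le (x : ℝ) (k : ℤ) (c : ℝ) (h1 : x - 1 / 2 - k ≤ c) (h2 : -c ≤ x - 1 / 2 - k) :
    dist (x : AddCircle (1 : ℝ)) ((1 / 2 : ℝ) : AddCircle (1 : ℝ)) ≤ c := by
  rw [dist_eq_norm, ← AddCircle.coe_sub, UnitAddCircle.norm_eq]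
  exact (round_le _ k).trans (abs_le.2 ⟨h2, h1⟩)

lemma exists_of_dist_half_lt (x c : ℝ)
    (h : dist (x : AddCircle (1 : ℝ)) ((1 / 2 : ℝ) : AddCircle (1 : ℝ)) < c) :
    ∃ k : ℤ, -c < x - 1 / 2 - k ∧ x - 1 / 2 - k < c := by
  rw [dist_eq_norm, ← AddCircle.coe_sub, UnitAddCircle.norm_eq] at h
  exact ⟨_, abs_lt.1 h⟩

/-- No integer lies strictly between `n` and `n + 1`. -/
lemma int_gap (K n : ℤ) (h1 : (n : ℝ) < K) (h2 : (K : ℝ) < n + 1) : False := by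
  have a : n < K := by exact_mod_cast h1
  have b : K < n + 1 := by exact_mod_cast h2
  omega

lemma core (s : ℕ) (t e : ℝ) (he : (16 * (s : ℝ) + 60) * e = 1) (k0 k1 k2 k3 : ℤ)
    (a0 : -(1 / 4 + e) < t * 8 - 1 / 2 - k0) (b0 : t * 8 - 1 / 2 - k0 < 1 / 4 + e)
    (a1 : -(1 / 4 + e) < t * (4 * s + 3) - 1 / 2 - k1)
    (b1 : t * (4 * s + 3) - 1 / 2 - k1 < 1 / 4 + e)
    (a2 : -(1 / 4 + e) < t * (4 * s + 11) - 1 / 2 - k2)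
    (b2 : t * (4 * s + 11) - 1 / 2 - k2 < 1 / 4 + e)
    (a3 : -(1 / 4 + e) < t * (4 * s + 19) - 1 / 2 - k3)
    (b3 : t * (4 * s + 19) - 1 / 2 - k3 < 1 / 4 + e) : False := by
  have hs : (0 : ℝ) ≤ s := Nat.cast_nonneg s
  have he0 : 0 < e := by
    by_contra h
    push Not at h
    nlinarith
  have he1 : e ≤ 1 / 60 := by nlinarith
  obtain ⟨d, hd⟩ : ∃ d, d = t * 8 - 1 / 2 - k0 := ⟨_, rfl⟩
  obtain ⟨q, hq⟩ : ∃ q, q = t * (4 * s + 11) - 1 / 2 - k2 := ⟨_, rfl⟩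
  have rel : (4 * (s : ℝ) + 11) * (k0 + 1 / 2 + d) = 8 * (k2 + 1 / 2 + q) := by
    rw [hd, hq]; ring
  obtain ⟨f, hf⟩ : ∃ f : ℤ, f = k3 - k2 - k0 := ⟨_, rfl⟩
  obtain ⟨g, hg⟩ : ∃ g : ℤ, g = k2 - k0 - k1 := ⟨_, rfl⟩
  have hfr : (f : ℝ) = k3 - k2 - k0 := by rw [hf]; push_cast; ring
  have hgr : (g : ℝ) = k2 - k0 - k1 := by rw [hg]; push_cast; ring
  have f1 : -1 < f := by
    have : ((-1 : ℤ) : ℝ) < f := by push_cast; linarith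
    exact_mod_cast this
  have f2 : f < 2 := by
    have : (f : ℝ) < (2 : ℤ) := by push_cast; linarith
    exact_mod_cast this
  have g1 : -1 < g + 1 := by
    have : ((-1 : ℤ) : ℝ) < g + 1 := by push_cast; linarith
    exact_mod_cast this
  have g2 : g < 2 := by
    have : (g : ℝ) < (2 : ℤ) := by push_cast; linarith
    exact_mod_cast this
  have u0 : -(1 / 4 + e) < d := by linarith
  have v0 : d < 1 / 4 + e := by linarith
  have u2 : -(1 / 4 + e) < q := by linarith
  have v2 : q < 1 / 4 + e := by linarith
  have u3 : -(1 / 4 + e) < q + d + 1 / 2 - f := by linarith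
  have v3 : q + d + 1 / 2 - f < 1 / 4 + e := by linarith
  have u1 : -(1 / 4 + e) < q - d - 1 / 2 + g := by linarith
  have v1 : q - d - 1 / 2 + g < 1 / 4 + e := by linarith
  clear a0 a1 a2 a3 b0 b1 b2 b3
  have hcase : (f = 0 ∨ f = 1) ∧ (g = 0 ∨ g = 1) := by
    have : g ≠ -1 := by
      rintro rfl
      push_cast at u1
      linarith
    omega
  have hm : 0 < 4 * (s : ℝ) + 3 := by linarith
  obtain ⟨hfv | hfv, hgv | hgv⟩ := hcase <;> rw [hfv] at u3 v3 <;> rw [hgv] at u1 v1 <;>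
    push_cast at u1 u3 v1 v3 <;> clear hf hg hfv hgv f1 f2 g1 g2 hfr hgr hd hq
  · apply int_gap (8 * k2 + 1 - (4 * s + 11) * k0 - s) (-1) <;> push_cast <;> nlinarith
  · apply int_gap (8 * k2 + 2 - (4 * s + 11) * k0 - (2 * s + 5)) (0) <;> push_cast <;> nlinarith
  · apply int_gap (8 * k2 + 6 - (4 * s + 11) * k0 - (2 * s + 5)) (0) <;> push_cast <;> nlinarith
  · apply int_gap (8 * k2 + 4 - (4 * s + 11) * k0 - (3 * s + 8)) (0) <;> push_cast <;> nlinarith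

/-- The Fan–Sun family: `D(⟨(8, 4s+3, 4s+11, 4s+19)⟩_ℝ) = 1/4 + 1/(16s + 60)`. -/
theorem stmt17 (s : ℕ) (hs : 1 ≤ s) :
    DVal (spanTorus ![![(8 : ℤ), 4 * (s : ℤ) + 3, 4 * (s : ℤ) + 11, 4 * (s : ℤ) + 19]]) =
      1/4 + 1/(16 * (s : ℝ) + 60) := by
  obtain ⟨e, hee⟩ : ∃ e : ℝ, e = 1 / (16 * (s : ℝ) + 60) := ⟨_, rfl⟩
  have hs0 : (0 : ℝ) ≤ s := Nat.cast_nonneg s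
  have he : (16 * (s : ℝ) + 60) * e = 1 := by
    rw [hee]; field_simp
  have he0 : 0 < e := by rw [hee]; positivity
  have he1 : e ≤ 1 / 60 := by nlinarith
  rw [← hee]
  have lower : ∀ x ∈ ((fun x : Torus 4 => ⨆ i, dist (x i) ((1 / 2 : ℝ) : AddCircle (1 : ℝ))) ''
      (spanTorus ![![(8 : ℤ), 4 * (s : ℤ) + 3, 4 * (s : ℤ) + 11, 4 * (s : ℤ) + 19]])),
      1 / 4 + e ≤ x := by
    rintro _ ⟨_, ⟨t, rfl⟩, rfl⟩
    by_contra! hlt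
    have hall := fun i : Fin 4 => lt_of_le_of_lt (le_ciSup (Set.finite_range _).bddAbove i) hlt
    obtain ⟨k0, a0, b0⟩ := exists_of_dist_half_lt _ _ (hall 0)
    obtain ⟨k1, a1, b1⟩ := exists_of_dist_half_lt _ _ (hall 1)
    obtain ⟨k2, a2, b2⟩ := exists_of_dist_half_lt _ _ (hall 2)
    obtain ⟨k3, a3, b3⟩ := exists_of_dist_half_lt _ _ (hall 3)
    simp at a0 b0 a1 b1 a2 b2 a3 b3
    apply core s (t 0) e he k0 k1 k2 k3 <;> linarith
  apply IsLeast.csInf_eq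
  refine ⟨?_, lower⟩
  · have hse : (s : ℝ) * e = (1 - 60 * e) / 16 := by linarith
    refine ⟨_, ⟨fun _ => ((s : ℝ) + 6) / 4 + 1 / 16 + e / 4, rfl⟩, ?_⟩
    have key : ∀ i : Fin 4, dist (torusProj (fun i => ∑ j : Fin 1,
        (((s : ℝ) + 6) / 4 + 1 / 16 + e / 4) * ((![![(8 : ℤ), 4 * (s : ℤ) + 3, 4 * (s : ℤ) + 11,
          4 * (s : ℤ) + 19]] j i : ℤ) : ℝ)) i) ((1 / 2 : ℝ) : AddCircle (1 : ℝ)) ≤ 1 / 4 + e := by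
      intro i
      fin_cases i
      · apply dist_half_le _ (2 * s + 12) <;> simp <;> nlinarith
      · apply dist_half_le _ ((s + 4) ^ 2 + 2 * s + 7 - 3 * s - 19) <;> simp <;> nlinarith
      · apply dist_half_le _ ((s + 4) ^ 2 + 2 * s + 7 - s - 6) <;> simp <;> nlinarith
      · apply dist_half_le _ ((s + 4) ^ 2 + 2 * s + 7 + s + 6) <;> simp <;> nlinarith
    apply le_antisymm (ciSup_le key)
    exact lower _ ⟨_, ⟨fun _ => ((s : ℝ) + 6) / 4 + 1 / 16 + e / 4, rfl⟩, rfl⟩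
end
end

section
/- Let n ≥ 3 be a natural number and let U ⊆ (ℝ/ℤ)^n be a 2-dimensional proper subtorus. Then the relative spectrum 𝒮₁(U) is a finite set if and only if the set Z(U) := { x ∈ U : max_{1≤i≤n} dist_{ℝ/ℤ}(x_i, 1/2) = D(U) } contains two non-parallel nondegenerate line segments, i.e., there exist x, x' ∈ (ℝ/ℤ)^n and nonzero vectors w, w' ∈ ℝ^n that are not scalar multiples of one another such that { x + t·w (mod ℤ^n) : t ∈ [0,1] } ⊆ Z(U) and { x' + t·w' (mod ℤ^n) : t ∈ [0,1] } ⊆ Z(U). -/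
noncomputable section

/-- The locus where `U` achieves its `D`-value. -/
def ZSet {n : ℕ} (U : Set (Torus n)) : Set (Torus n) :=
  {x ∈ U | (⨆ i, dist (x i) ((1 / 2 : ℝ) : AddCircle (1 : ℝ))) = DVal U}


def halfPt (n : ℕ) : Torus n := fun _ => ((1 / 2 : ℝ) : AddCircle (1 : ℝ))

lemma sup_eq_dist {n : ℕ} (hn : 0 < n) (x : Torus n) :
    (⨆ i, dist (x i) ((1 / 2 : ℝ) : AddCircle (1 : ℝ))) = dist x (halfPt n) := by
  have : Nonempty (Fin n) := ⟨⟨0, hn⟩⟩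
  apply le_antisymm
  · exact ciSup_le fun i => dist_le_pi_dist x (halfPt n) i
  · have hb : BddAbove (Set.range fun i => dist (x i) ((1 / 2 : ℝ) : AddCircle (1 : ℝ))) :=
      (Set.finite_range _).bddAbove
    rw [dist_pi_le_iff (Real.iSup_nonneg fun i => dist_nonneg)]
    exact fun i => le_ciSup hb i

lemma DVal_eq {n : ℕ} (hn : 0 < n) (S : Set (Torus n)) :
    DVal S = sInf ((fun x => dist x (halfPt n)) '' S) := by
  unfold DVal
  simp_rw [sup_eq_dist hn]

lemma DVal_le {n : ℕ} (hn : 0 < n) {S : Set (Torus n)} {x : Torus n} (hx : x ∈ S) :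
    DVal S ≤ dist x (halfPt n) := by
  rw [DVal_eq hn]
  refine csInf_le ⟨0, ?_⟩ ⟨x, hx, rfl⟩
  rintro _ ⟨y, -, rfl⟩
  exact dist_nonneg

lemma DVal_attained {n : ℕ} (hn : 0 < n) {S : Set (Torus n)} (hS : IsCompact S)
    (hne : S.Nonempty) : ∃ x ∈ S, dist x (halfPt n) = DVal S := by
  obtain ⟨x, hx, hmin⟩ := hS.exists_isMinOn hne
    (f := fun x => dist x (halfPt n)) (by fun_prop)
  refine ⟨x, hx, le_antisymm ?_ (DVal_le hn hx)⟩
  rw [DVal_eq hn]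
  refine le_csInf (hne.image _) ?_
  rintro _ ⟨y, hy, rfl⟩
  exact hmin hy

lemma torusProj_eq_iff {n : ℕ} (x y : Fin n → ℝ) (m : Fin n → ℤ) (h : ∀ i, x i = y i + m i) :
    torusProj x = torusProj y := by
  funext i
  simp only [torusProj, h i]
  have : ((m i : ℝ) : AddCircle (1 : ℝ)) = 0 := by
    rw [AddCircle.coe_eq_zero_iff]; exact ⟨m i, by simp⟩
  rw [AddCircle.coe_add, this, add_zero]

lemma spanTorus_compact {n k : ℕ} (v : Fin k → Fin n → ℤ) : IsCompact (spanTorus v) := by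
  have hc : Continuous (fun t : Fin k → ℝ =>
      (torusProj fun i => ∑ j, t j * (v j i : ℝ) : Torus n)) := by
    refine continuous_pi fun i => ?_
    refine (AddCircle.continuous_mk' (1 : ℝ)).comp ?_
    fun_prop
  have : spanTorus v = (fun t : Fin k → ℝ =>
      (torusProj fun i => ∑ j, t j * (v j i : ℝ) : Torus n)) '' (Set.Icc 0 1) := by
    ext p
    constructor
    · rintro ⟨t, rfl⟩
      refine ⟨fun j => Int.fract (t j), ⟨fun j => Int.fract_nonneg _,
        fun j => (Int.fract_lt_one _).le⟩, ?_⟩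
      symm
      apply torusProj_eq_iff _ _ (fun i => ∑ j, ⌊t j⌋ * v j i)
      intro i
      push_cast
      rw [← Finset.sum_add_distrib]
      refine Finset.sum_congr rfl fun j _ => ?_
      rw [← add_mul, Int.fract_add_floor]
    · rintro ⟨t, -, rfl⟩
      exact ⟨t, rfl⟩
  rw [this]
  exact isCompact_Icc.image hc

lemma zero_mem_span {n k : ℕ} (v : Fin k → Fin n → ℤ) : (0 : Torus n) ∈ spanTorus v :=
  ⟨0, by funext i; simp [torusProj]⟩

def EE {n : ℕ} (v : Fin 2 → Fin n → ℤ) (a b : ℝ) : Fin n → ℝ :=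
  fun i => a * v 0 i + b * v 1 i

lemma mem_span2 {n : ℕ} (v : Fin 2 → Fin n → ℤ) (p : Torus n) :
    p ∈ spanTorus v ↔ ∃ a b : ℝ, p = torusProj (EE v a b) := by
  constructor
  · rintro ⟨t, rfl⟩
    refine ⟨t 0, t 1, ?_⟩
    simp [Fin.sum_univ_two]
    rfl
  · rintro ⟨a, b, rfl⟩
    refine ⟨![a, b], ?_⟩
    simp [Fin.sum_univ_two]
    rfl

lemma mem_span1 {n : ℕ} (u : Fin 1 → Fin n → ℤ) (p : Torus n) :
    p ∈ spanTorus u ↔ ∃ t : ℝ, p = torusProj (fun i => t * u 0 i) := by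
  constructor
  · rintro ⟨t, rfl⟩
    exact ⟨t 0, by simp⟩
  · rintro ⟨a, rfl⟩
    exact ⟨fun _ => a, by simp⟩

lemma dist_half_le_iff (x c : ℝ) :
    dist (x : AddCircle (1 : ℝ)) ((1 / 2 : ℝ) : AddCircle (1 : ℝ)) ≤ c ↔
      ∃ m : ℤ, |x - 1 / 2 - m| ≤ c := by
  rw [dist_eq_norm, ← AddCircle.coe_sub, AddCircle.norm_eq]
  simp only [inv_one, one_mul, mul_one]
  constructor
  · intro h; exact ⟨_, h⟩
  · rintro ⟨m, h⟩; exact (round_le _ m).trans h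

lemma dist_half_zero : dist (0 : AddCircle (1 : ℝ)) ((1 / 2 : ℝ) : AddCircle (1 : ℝ)) = 1 / 2 := by
  rw [dist_comm, dist_zero_right]
  have := AddCircle.norm_half_period_eq (1 : ℝ)
  simpa using this

lemma dist_half_lt {x : AddCircle (1 : ℝ)} (hx : x ≠ 0) :
    dist x ((1 / 2 : ℝ) : AddCircle (1 : ℝ)) < 1 / 2 := by
  induction x using QuotientAddGroup.induction_on with
  | H x =>
  have h0 : Int.fract x ≠ 0 := by
    intro h
    apply hx
    change (x : AddCircle (1 : ℝ)) = 0
    rw [AddCircle.coe_eq_zero_iff]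
    exact ⟨⌊x⌋, by rw [Int.fract] at h; simp; linarith⟩
  have h1 := Int.fract_nonneg x
  have h2 := Int.fract_lt_one x
  have h3 : 0 < Int.fract x := lt_of_le_of_ne h1 (Ne.symm h0)
  refine lt_of_le_of_lt ((dist_half_le_iff x _).2 ⟨⌊x⌋, le_rfl⟩) ?_
  rw [Int.fract] at h2 h3
  rw [abs_lt]; constructor <;> linarith

lemma proper_iff {n : ℕ} (hn : 0 < n) (S : Set (Torus n)) :
    IsProperSub S ↔ ∃ x ∈ S, dist x (halfPt n) < 1 / 2 := by
  have : Nonempty (Fin n) := ⟨⟨0, hn⟩⟩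
  unfold IsProperSub
  rw [Set.not_subset]
  refine exists_congr fun x => and_congr_right fun _ => ?_
  rw [dist_pi_lt_iff (by norm_num)]
  simp only [Set.mem_iUnion, Set.mem_ofPred_eq, not_exists]
  refine forall_congr' fun i => ⟨fun h => dist_half_lt h, fun h h0 => ?_⟩
  rw [h0] at h
  exact absurd h (by rw [halfPt, dist_half_zero]; exact lt_irrefl _)

/-- coordinates independent of the `i`-th one -/
lemma exists_minor {n : ℕ} (v : Fin 2 → Fin n → ℤ)
    (hv : LinearIndependent ℝ (fun j : Fin 2 => fun i : Fin n => (v j i : ℝ)))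
    (hp : IsProperSub (spanTorus v)) (i : Fin n) :
    ∃ j, v 0 i * v 1 j - v 0 j * v 1 i ≠ 0 := by
  by_contra! H
  have h2 := LinearIndependent.pair_iff.1
    (show LinearIndependent ℝ ![(fun i : Fin n => (v 0 i : ℝ)), fun i => (v 1 i : ℝ)] by
      convert hv using 1
      funext j; fin_cases j <;> rfl) (-(v 1 i)) (v 0 i) (by
      funext j
      have := H j
      have h' : (v 0 i : ℝ) * v 1 j - v 0 j * v 1 i = 0 := by exact_mod_cast this
      simp
      linarith)
  obtain ⟨ha, hb⟩ := h2
  apply hp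
  intro p hp
  rw [mem_span2] at hp
  obtain ⟨a, b, rfl⟩ := hp
  simp only [Set.mem_iUnion, Set.mem_ofPred_eq]
  refine ⟨i, ?_⟩
  have hb' : (v 1 i : ℝ) = 0 := by linarith
  simp [torusProj, EE, hb, hb']

lemma eq_zero_of_all_int (c : ℝ)
    (h : ∀ t ∈ Set.Icc (0 : ℝ) 1, ((t * c : ℝ) : AddCircle (1 : ℝ)) = 0) : c = 0 := by
  by_contra hc
  have hc' : 0 < |c| := abs_pos.2 hc
  have ht := h (1 / (2 * |c| + 1)) ⟨by positivity, by
    rw [div_le_one (by positivity)]; linarith⟩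
  rw [AddCircle.coe_eq_zero_iff] at ht
  obtain ⟨m, hm⟩ := ht
  have h1 : |(m : ℝ)| < 1 := by
    have : (m : ℝ) = 1 / (2 * |c| + 1) * c := by simpa using hm
    rw [this, abs_mul, abs_of_pos (by positivity), one_div, inv_mul_lt_iff₀ (by positivity)]
    linarith
  have h2 : m = 0 := by
    rw [← Int.abs_lt_one_iff]; exact_mod_cast h1
  rw [h2] at hm
  have : 0 < 1 / (2 * |c| + 1) := by positivity
  simp at hm
  rcases hm with hm | hm
  · linarith [abs_nonneg c]
  · exact hc hm

/-- A segment inside `U` has direction in the plane. -/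
lemma dir_mem {n : ℕ} (v : Fin 2 → Fin n → ℤ) (i j : Fin n)
    (hD : v 0 i * v 1 j - v 0 j * v 1 i ≠ 0) (x : Torus n) (w : Fin n → ℝ)
    (h : ∀ t ∈ Set.Icc (0 : ℝ) 1, (x + torusProj fun i => t * w i) ∈ spanTorus v) :
    ∃ a b : ℝ, w = EE v a b ∧
      a * (v 0 i * v 1 j - v 0 j * v 1 i) = w i * v 1 j - w j * v 1 i ∧
      b * (v 0 i * v 1 j - v 0 j * v 1 i) = v 0 i * w j - v 0 j * w i := by
  have hDR : (v 0 i * v 1 j - v 0 j * v 1 i : ℝ) ≠ 0 := by exact_mod_cast hD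
  have key : ∀ k, ∀ p ∈ spanTorus v,
      (v 0 i * v 1 j - v 0 j * v 1 i) • p k - (v 0 k * v 1 j - v 0 j * v 1 k) • p i
        - (v 0 i * v 1 k - v 0 k * v 1 i) • p j = 0 := by
    intro k p hp
    rw [mem_span2] at hp
    obtain ⟨a, b, rfl⟩ := hp
    simp only [torusProj, EE]
    rw [← AddCircle.coe_zsmul, ← AddCircle.coe_zsmul, ← AddCircle.coe_zsmul, ← AddCircle.coe_sub,
      ← AddCircle.coe_sub, ← AddCircle.coe_zero]
    congr 1
    simp only [zsmul_eq_mul]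
    push_cast
    ring
  have hx : x ∈ spanTorus v := by
    have := h 0 ⟨le_rfl, zero_le_one⟩
    convert this using 1
    funext k; simp [torusProj]
  have key2 : ∀ k, (v 0 i * v 1 j - v 0 j * v 1 i) * w k - (v 0 k * v 1 j - v 0 j * v 1 k) * w i
        - (v 0 i * v 1 k - v 0 k * v 1 i) * w j = 0 := by
    intro k
    apply eq_zero_of_all_int
    intro t ht
    have h1 := key k _ (h t ht)
    have h2 := key k x hx
    have h3 : (v 0 i * v 1 j - v 0 j * v 1 i) • ((t * w k : ℝ) : AddCircle (1 : ℝ))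
      - (v 0 k * v 1 j - v 0 j * v 1 k) • ((t * w i : ℝ) : AddCircle (1 : ℝ))
        - (v 0 i * v 1 k - v 0 k * v 1 i) • ((t * w j : ℝ) : AddCircle (1 : ℝ)) = 0 := by
      simp only [Pi.add_apply, torusProj, smul_add] at h1
      rw [← h1, ← sub_eq_zero]
      rw [← neg_eq_zero] at h2
      rw [← h2]
      abel
    rw [← AddCircle.coe_zsmul, ← AddCircle.coe_zsmul, ← AddCircle.coe_zsmul, ← AddCircle.coe_sub,
      ← AddCircle.coe_sub] at h3
    rw [← h3]
    congr 1
    simp only [zsmul_eq_mul]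
    push_cast
    ring
  refine ⟨(w i * v 1 j - w j * v 1 i) / (v 0 i * v 1 j - v 0 j * v 1 i),
    (v 0 i * w j - v 0 j * w i) / (v 0 i * v 1 j - v 0 j * v 1 i), ?_,
    div_mul_cancel₀ _ hDR, div_mul_cancel₀ _ hDR⟩
  funext k
  have := key2 k
  simp only [EE]
  rw [div_mul_eq_mul_div, div_mul_eq_mul_div, ← add_div, eq_div_iff hDR]
  linarith

lemma hit (A B : ℤ) (hAB : IsCoprime A B) (p1 p2 c d : ℝ) (h : 1 ≤ |B * c - A * d|) :
    ∃ r ∈ Set.Icc (0 : ℝ) 1, ∃ t : ℝ, ∃ X Y : ℤ,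
      p1 + r * c = t * A + X ∧ p2 + r * d = t * B + Y := by
  obtain ⟨e, f, hef⟩ := hAB
  have hef' : (e * A + f * B : ℝ) = 1 := by exact_mod_cast hef
  have h1 : ∃ r ∈ Set.Icc (0 : ℝ) 1, ∃ N : ℤ,
      (B * p1 - A * p2) + r * (B * c - A * d) = N := by
    generalize (B * c - A * d : ℝ) = σ at h
    generalize (B * p1 - A * p2 : ℝ) = g
    rcases le_abs.1 h with h | h
    · refine ⟨(⌈g⌉ - g) / σ, ⟨div_nonneg (by linarith [Int.le_ceil g]) (by linarith), ?_⟩,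
        ⌈g⌉, ?_⟩
      · rw [div_le_one (by linarith)]
        linarith [Int.ceil_lt_add_one g]
      · rw [div_mul_cancel₀ _ (by linarith)]; ring
    · refine ⟨(g - ⌊g⌋) / (-σ), ⟨div_nonneg (by linarith [Int.floor_le g]) (by linarith), ?_⟩,
        ⌊g⌋, ?_⟩
      · rw [div_le_one (by linarith)]
        linarith [Int.lt_floor_add_one g]
      · rw [div_neg, neg_mul, div_mul_cancel₀ _ (by linarith)]; ring
  obtain ⟨r, hr, N, hN⟩ := h1
  refine ⟨r, hr, e * (p1 + r * c - f * N) + f * (p2 + r * d + e * N), f * N, -(e * N), ?_, ?_⟩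
  · push_cast
    linear_combination (-(p1 + r * c - f * N)) * hef' + f * hN - f * N * hef'
  · push_cast
    linear_combination (-(p2 + r * d + e * N)) * hef' - e * hN + e * N * hef'

lemma finite_AB (c d c' d' : ℝ) (h : c * d' - c' * d ≠ 0) :
    {q : ℤ × ℤ | |q.2 * c - q.1 * d| < 1 ∧ |q.2 * c' - q.1 * d'| < 1}.Finite := by
  set δ := c * d' - c' * d with hδ
  have hδ' : 0 < |δ| := abs_pos.2 h
  set M : ℤ := ⌈(|c| + |c'| + |d| + |d'|) / |δ|⌉ with hM
  have hMle : (|c| + |c'| + |d| + |d'|) / |δ| ≤ M := Int.le_ceil _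
  rw [div_le_iff₀ hδ'] at hMle
  refine ((Set.finite_Icc (-M) M).prod (Set.finite_Icc (-M) M)).subset ?_
  rintro ⟨A, B⟩ ⟨h1, h2⟩
  simp only at h1 h2
  have bound : ∀ (z : ℤ) (p q r s : ℝ), |p| < 1 → |q| < 1 → z * δ = p * r - q * s →
      |r| + |s| ≤ |c| + |c'| + |d| + |d'| → z ∈ Set.Icc (-M) M := by
    intro z p q r s hp hq hz hrs
    have h3 : |(z : ℝ)| * |δ| ≤ M * |δ| := by
      rw [← abs_mul, hz]
      refine le_trans ?_ hMle
      refine le_trans ?_ hrs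
      refine (abs_sub _ _).trans ?_
      rw [abs_mul, abs_mul]
      nlinarith [abs_nonneg r, abs_nonneg s]
    have h4 := le_of_mul_le_mul_right h3 hδ'
    rw [abs_le] at h4
    exact ⟨by exact_mod_cast h4.1, by exact_mod_cast h4.2⟩
  refine ⟨bound A _ _ c' c h1 h2 (by rw [hδ]; ring) ?_, bound B _ _ d' d h1 h2 (by rw [hδ]; ring) ?_⟩
  · linarith [abs_nonneg d, abs_nonneg d']
  · linarith [abs_nonneg c, abs_nonneg c']

def lineAB {n : ℕ} (v : Fin 2 → Fin n → ℤ) (q : ℤ × ℤ) : Set (Torus n) :=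
  spanTorus (fun _ : Fin 1 => fun k => q.1 * v 0 k + q.2 * v 1 k)

lemma line_meets {n : ℕ} (v : Fin 2 → Fin n → ℤ) (A B : ℤ) (hAB : IsCoprime A B)
    (x : Torus n) (hx : x ∈ spanTorus v) (c d : ℝ) (h : 1 ≤ |B * c - A * d|) :
    ∃ t ∈ Set.Icc (0 : ℝ) 1, (x + torusProj fun i => t * EE v c d i) ∈ lineAB v (A, B) := by
  rw [mem_span2] at hx
  obtain ⟨p1, p2, rfl⟩ := hx
  obtain ⟨r, hr, t, X, Y, h1, h2⟩ := hit A B hAB p1 p2 c d h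
  refine ⟨r, hr, ?_⟩
  rw [lineAB, mem_span1]
  refine ⟨t, ?_⟩
  have : (torusProj (EE v p1 p2) + torusProj fun i => r * EE v c d i) =
      torusProj (fun i => EE v p1 p2 i + r * EE v c d i) := by
    funext i; simp [torusProj]
  rw [this]
  refine torusProj_eq_iff _ _ (fun i => X * v 0 i + Y * v 1 i) ?_
  intro i
  simp only [EE]
  push_cast
  linear_combination (v 0 i : ℝ) * h1 + (v 1 i : ℝ) * h2

/-- every one-dimensional subtorus of `U` is a line with coprime integer coordinates -/
lemma line_coprime {n : ℕ} (v : Fin 2 → Fin n → ℤ) (i j : Fin n)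
    (hD : v 0 i * v 1 j - v 0 j * v 1 i ≠ 0) (T : Set (Torus n)) (hT : IsSubtorus 1 T)
    (hTU : T ⊆ spanTorus v) : ∃ A B : ℤ, IsCoprime A B ∧ T = lineAB v (A, B) := by
  obtain ⟨u, hu, rfl⟩ := hT
  have hu0 : (fun i : Fin n => (u 0 i : ℝ)) ≠ 0 := hu.ne_zero 0
  obtain ⟨a, b, hw, ha, hb⟩ := dir_mem v i j hD 0 (fun i => (u 0 i : ℝ)) (by
    intro t _
    apply hTU
    rw [mem_span1]
    exact ⟨t, by simp⟩)
  set Δ := v 0 i * v 1 j - v 0 j * v 1 i with hΔ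
  have hΔR : (Δ : ℝ) = v 0 i * v 1 j - v 0 j * v 1 i := by rw [hΔ]; push_cast; ring
  have hΔ0 : (Δ : ℝ) ≠ 0 := by exact_mod_cast hD
  set A' : ℤ := u 0 i * v 1 j - u 0 j * v 1 i with hA'
  set B' : ℤ := v 0 i * u 0 j - v 0 j * u 0 i with hB'
  have ha' : a * Δ = A' := by rw [hΔR, ha, hA']; push_cast; ring
  have hb' : b * Δ = B' := by rw [hΔR, hb, hB']; push_cast; ring
  have hne : ¬ (A' = 0 ∧ B' = 0) := by
    rintro ⟨h1, h2⟩
    rw [h1] at ha'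
    rw [h2] at hb'
    have a0 : a = 0 := by simpa [hΔ0] using ha'
    have b0 : b = 0 := by simpa [hΔ0] using hb'
    apply hu0
    rw [hw]
    funext k
    simp [EE, a0, b0]
  have hg : (0 : ℤ) < (Int.gcd A' B' : ℤ) := by
    have : Int.gcd A' B' ≠ 0 := by
      intro h; exact hne (Int.gcd_eq_zero_iff.1 h)
    omega
  obtain ⟨A, B, hcop, hA, hB⟩ : ∃ A B : ℤ, IsCoprime A B ∧ A' = A * Int.gcd A' B' ∧
      B' = B * Int.gcd A' B' := by
    obtain ⟨A, B, h1, h2, h3⟩ := Int.exists_gcd_one (m := A') (n := B') (by exact_mod_cast hg)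
    exact ⟨A, B, Int.isCoprime_iff_gcd_eq_one.2 h1, h2, h3⟩
  refine ⟨A, B, hcop, ?_⟩
  set g : ℤ := (Int.gcd A' B' : ℤ) with hgdef
  have hgR : (g : ℝ) ≠ 0 := by exact_mod_cast hg.ne'
  have hAR : (A' : ℝ) = A * g := by exact_mod_cast hA
  have hBR : (B' : ℝ) = B * g := by exact_mod_cast hB
  have hk : ∀ k, (Δ : ℝ) * u 0 k = g * (A * v 0 k + B * v 1 k) := by
    intro k
    have := congrFun hw k
    simp only [EE] at this
    rw [this]
    linear_combination (v 0 k : ℝ) * (ha'.trans hAR) + (v 1 k : ℝ) * (hb'.trans hBR)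
  ext p
  rw [lineAB, mem_span1, mem_span1]
  constructor
  · rintro ⟨t, rfl⟩
    refine ⟨t * g / Δ, ?_⟩
    congr 1
    funext k
    push_cast
    rw [div_mul_eq_mul_div, eq_div_iff hΔ0]
    linear_combination t * hk k
  · rintro ⟨t, rfl⟩
    refine ⟨t * Δ / g, ?_⟩
    congr 1
    funext k
    push_cast
    rw [div_mul_eq_mul_div, eq_div_iff hgR]
    linear_combination (-t) * hk k

lemma mem_ZSet {n : ℕ} (hn : 0 < n) (U : Set (Torus n)) (x : Torus n) :
    x ∈ ZSet U ↔ x ∈ U ∧ dist x (halfPt n) = DVal U := by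
  simp only [ZSet, Set.mem_ofPred_eq, sup_eq_dist hn]

lemma DVal_mono {n : ℕ} (hn : 0 < n) {k : ℕ} (v : Fin k → Fin n → ℤ) {U : Set (Torus n)}
    (h : spanTorus v ⊆ U) : DVal U ≤ DVal (spanTorus v) := by
  obtain ⟨x, hx, hxe⟩ := DVal_attained hn (spanTorus_compact v) ⟨0, zero_mem_span v⟩
  rw [← hxe]
  exact DVal_le hn (h hx)

lemma backward {n : ℕ} (hn : 0 < n) (v : Fin 2 → Fin n → ℤ)
    (hv : LinearIndependent ℝ (fun j : Fin 2 => fun i : Fin n => (v j i : ℝ)))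
    (hp : IsProperSub (spanTorus v)) (x x' : Torus n) (w w' : Fin n → ℝ)
    (hw : w ≠ 0) (hww : ∀ c : ℝ, w' ≠ c • w)
    (h1 : {p : Torus n | ∃ t ∈ Set.Icc (0 : ℝ) 1, p = x + torusProj fun i => t * w i}
      ⊆ ZSet (spanTorus v))
    (h2 : {p : Torus n | ∃ t ∈ Set.Icc (0 : ℝ) 1, p = x' + torusProj fun i => t * w' i}
      ⊆ ZSet (spanTorus v)) : (relSpec1 (spanTorus v)).Finite := by
  obtain ⟨j, hj⟩ := exists_minor v hv hp ⟨0, hn⟩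
  have memU : ∀ (x : Torus n) (w : Fin n → ℝ),
      {p : Torus n | ∃ t ∈ Set.Icc (0 : ℝ) 1, p = x + torusProj fun i => t * w i}
      ⊆ ZSet (spanTorus v) →
      (∀ t ∈ Set.Icc (0 : ℝ) 1, (x + torusProj fun i => t * w i) ∈ spanTorus v) := by
    intro x w h t ht
    exact (h ⟨t, ht, rfl⟩).1
  have memU0 : ∀ (x : Torus n) (w : Fin n → ℝ),
      (∀ t ∈ Set.Icc (0 : ℝ) 1, (x + torusProj fun i => t * w i) ∈ spanTorus v) →
      x ∈ spanTorus v := by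
    intro x w h
    have := h 0 ⟨le_rfl, zero_le_one⟩
    convert this using 1
    funext k; simp [torusProj]
  have hx := memU0 x w (memU x w h1)
  have hx' := memU0 x' w' (memU x' w' h2)
  obtain ⟨c, d, rfl, -, -⟩ := dir_mem v _ j hj x w (memU x w h1)
  obtain ⟨c', d', rfl, -, -⟩ := dir_mem v _ j hj x' w' (memU x' w' h2)
  have hdet : c * d' - c' * d ≠ 0 := by
    intro h0
    by_cases hc : c = 0
    · by_cases hd : d = 0
      · apply hw; funext k; simp [EE, hc, hd]
      · apply hww (d' / d)
        have : c' = 0 := by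
          have : c' * d = 0 := by rw [hc] at h0; linarith
          simpa [hd] using this
        funext k; simp [EE, hc, this]; field_simp
    · apply hww (c' / c)
      funext k
      have : d' = c' / c * d := by field_simp; linarith
      simp only [EE, Pi.smul_apply, smul_eq_mul]
      rw [this]; field_simp
  refine (((finite_AB c d c' d' hdet).image (fun q => DVal (lineAB v q))).insert
    (DVal (spanTorus v))).subset ?_
  rintro _ ⟨T, hT, -, hTU, rfl⟩
  obtain ⟨A, B, hcop, rfl⟩ := line_coprime v _ j hj T hT hTU
  by_cases hm : |B * c - A * d| < 1 ∧ |B * c' - A * d'| < 1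
  · exact Or.inr ⟨(A, B), hm, rfl⟩
  · left
    refine le_antisymm ?_ (DVal_mono hn _ hTU)
    rw [not_and_or, not_lt, not_lt] at hm
    rcases hm with hm | hm
    · obtain ⟨t, ht, hmem⟩ := line_meets v A B hcop x hx c d hm
      rw [← ((mem_ZSet hn _ _).1 (h1 ⟨t, ht, rfl⟩)).2]
      exact DVal_le hn hmem
    · obtain ⟨t, ht, hmem⟩ := line_meets v A B hcop x' hx' c' d' hm
      rw [← ((mem_ZSet hn _ _).1 (h2 ⟨t, ht, rfl⟩)).2]
      exact DVal_le hn hmem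


def cell {n : ℕ} (v : Fin 2 → Fin n → ℤ) (D : ℝ) (m : Fin n → ℤ) : Set (Fin n → ℝ) :=
  {y | (∃ a b : ℝ, y = EE v a b) ∧ ∀ k, |y k - 1 / 2 - m k| ≤ D}

lemma DVal_nonneg {n : ℕ} (hn : 0 < n) (v : Fin 2 → Fin n → ℤ) : 0 ≤ DVal (spanTorus v) := by
  obtain ⟨x, hx, hxe⟩ := DVal_attained hn (spanTorus_compact v) ⟨0, zero_mem_span v⟩
  rw [← hxe]; exact dist_nonneg

lemma cell_Z {n : ℕ} (hn : 0 < n) (v : Fin 2 → Fin n → ℤ) (m : Fin n → ℤ) (y : Fin n → ℝ)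
    (hy : y ∈ cell v (DVal (spanTorus v)) m) : torusProj y ∈ ZSet (spanTorus v) := by
  obtain ⟨⟨a, b, rfl⟩, h⟩ := hy
  rw [mem_ZSet hn]
  have hU : torusProj (EE v a b) ∈ spanTorus v := (mem_span2 _ _).2 ⟨a, b, rfl⟩
  refine ⟨hU, le_antisymm ?_ (DVal_le hn hU)⟩
  rw [dist_pi_le_iff (DVal_nonneg hn v)]
  exact fun k => (dist_half_le_iff _ _).2 ⟨m k, h k⟩

lemma cell_convex {n : ℕ} (v : Fin 2 → Fin n → ℤ) (D : ℝ) (m : Fin n → ℤ) (x y : Fin n → ℝ)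
    (hx : x ∈ cell v D m) (hy : y ∈ cell v D m) (t : ℝ) (ht : t ∈ Set.Icc (0 : ℝ) 1) :
    (fun k => x k + t * (y k - x k)) ∈ cell v D m := by
  obtain ⟨⟨a, b, rfl⟩, hx⟩ := hx
  obtain ⟨⟨a', b', rfl⟩, hy⟩ := hy
  refine ⟨⟨a + t * (a' - a), b + t * (b' - b), ?_⟩, ?_⟩
  · funext k; simp only [EE]; ring
  · intro k
    have h1 := hx k
    have h2 := hy k
    beta_reduce
    generalize EE v a b k = p at *
    generalize EE v a' b' k = q at *
    obtain ⟨ht0, ht1⟩ := ht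
    rw [abs_le] at *
    constructor
    · nlinarith
    · nlinarith

lemma cell_seg {n : ℕ} (hn : 0 < n) (v : Fin 2 → Fin n → ℤ) (m : Fin n → ℤ) (x y : Fin n → ℝ)
    (hx : x ∈ cell v (DVal (spanTorus v)) m) (hy : y ∈ cell v (DVal (spanTorus v)) m) :
    {p : Torus n | ∃ t ∈ Set.Icc (0 : ℝ) 1,
      p = torusProj x + torusProj fun i => t * (y - x) i} ⊆ ZSet (spanTorus v) := by
  rintro _ ⟨t, ht, rfl⟩
  have := cell_Z hn v m _ (cell_convex v _ m x y hx hy t ht)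
  convert this using 1
  funext k
  simp [torusProj]

/-- two points of a cell share a coordinate -/
lemma cell_coord {n : ℕ} (hn : 0 < n) (v : Fin 2 → Fin n → ℤ) (m : Fin n → ℤ) (x y : Fin n → ℝ)
    (hx : x ∈ cell v (DVal (spanTorus v)) m) (hy : y ∈ cell v (DVal (spanTorus v)) m) :
    ∃ i, x i = y i := by
  have hne : Nonempty (Fin n) := ⟨⟨0, hn⟩⟩
  set D := DVal (spanTorus v) with hD
  have hz := cell_convex v _ m x y hx hy (1 / 2) ⟨by norm_num, by norm_num⟩
  have hZ := (mem_ZSet hn _ _).1 (cell_Z hn v m _ hz)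
  by_contra! H
  have hlt : ∀ k, |x k + 1 / 2 * (y k - x k) - 1 / 2 - m k| < D := by
    intro k
    have h1 := hx.2 k
    have h2 := hy.2 k
    have h3 := H k
    rw [abs_le] at h1 h2
    rw [abs_lt]
    rcases lt_or_gt_of_ne h3 with h | h <;> constructor <;> linarith
  have hpos : 0 < D := lt_of_le_of_lt (abs_nonneg _) (hlt ⟨0, hn⟩)
  have : dist (torusProj fun k => x k + 1 / 2 * (y k - x k)) (halfPt n) < D := by
    rw [dist_pi_lt_iff hpos]
    intro k
    exact lt_of_le_of_lt ((dist_half_le_iff _ _).2 ⟨m k, le_rfl⟩) (hlt k)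
  exact absurd hZ.2 this.ne

lemma finite_coord {n : ℕ} (hn : 0 < n) (v : Fin 2 → Fin n → ℤ)
    (hp : DVal (spanTorus v) < 1 / 2) (i : Fin n)
    (hi : ∀ m, ∀ x ∈ cell v (DVal (spanTorus v)) m, ∀ y ∈ cell v (DVal (spanTorus v)) m,
      x i = y i) : ((fun p : Torus n => p i) '' ZSet (spanTorus v)).Finite := by
  set D := DVal (spanTorus v) with hD
  let M : Fin n → ℤ := fun k => |v 0 k| + |v 1 k| + 1
  refine ((Set.finite_Icc (-M) M).biUnion
    (t := fun m => (fun y : Fin n → ℝ => ((y i : ℝ) : AddCircle (1 : ℝ))) '' cell v D m)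
    fun m _ => Set.Subsingleton.finite ?_).subset ?_
  · rintro _ ⟨x, hx, rfl⟩ _ ⟨y, hy, rfl⟩
    simp only [hi m x hx y hy]
  · rintro _ ⟨p, hpZ, rfl⟩
    rw [mem_ZSet hn] at hpZ
    obtain ⟨hU, hd⟩ := hpZ
    rw [mem_span2] at hU
    obtain ⟨a, b, hab⟩ := hU
    have hp2 : p = torusProj (EE v (Int.fract a) (Int.fract b)) := by
      rw [hab]
      refine torusProj_eq_iff _ _ (fun k => ⌊a⌋ * v 0 k + ⌊b⌋ * v 1 k) ?_
      intro k
      simp only [EE, Int.fract]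
      push_cast
      ring
    have hk : ∀ k, ∃ m : ℤ, |EE v (Int.fract a) (Int.fract b) k - 1 / 2 - m| ≤ D := by
      intro k
      rw [← dist_half_le_iff, hD, ← hd]
      have := dist_le_pi_dist p (halfPt n) k
      rw [hp2] at this ⊢
      exact this
    choose m hm using hk
    have hmM : ∀ k, |m k| ≤ M k := by
      intro k
      have h1 := hm k
      have ha := Int.fract_nonneg a
      have ha' := (Int.fract_lt_one a).le
      have hb := Int.fract_nonneg b
      have hb' := (Int.fract_lt_one b).le
      have hE : |EE v (Int.fract a) (Int.fract b) k| ≤ |(v 0 k : ℝ)| + |(v 1 k : ℝ)| := by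
        simp only [EE]
        refine (abs_add_le _ _).trans ?_
        rw [abs_mul, abs_mul, abs_of_nonneg ha, abs_of_nonneg hb]
        nlinarith [abs_nonneg (v 0 k : ℝ), abs_nonneg (v 1 k : ℝ)]
      have : |(m k : ℝ)| ≤ |(v 0 k : ℝ)| + |(v 1 k : ℝ)| + 1 := by
        rw [abs_le] at h1 hE ⊢
        constructor <;> linarith
      simp only [M]
      exact_mod_cast this
    simp only [Set.mem_iUnion]
    refine ⟨m, ⟨fun k => ?_, fun k => ?_⟩, _, ⟨⟨_, _, rfl⟩, hm⟩, ?_⟩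
    · exact (abs_le.1 (hmM k)).1
    · exact (abs_le.1 (hmM k)).2
    · simp only [hp2, torusProj]

lemma recur (A : Set (AddCircle (1 : ℝ))) (hA : A.Finite) (ε : ℝ) (hε : 0 < ε) :
    ∃ᶠ s : ℕ in Filter.atTop, ∀ q ∈ A, ‖s • q‖ < ε := by
  have := hA.fintype
  let g : A → AddCircle (1 : ℝ) := fun q => q
  have h := mapClusterPt_zero_atTop_nsmul g
  have h2 := h.frequently (Metric.ball_mem_nhds (0 : A → AddCircle (1 : ℝ)) hε)
  refine h2.mono fun s hs q hq => ?_
  rw [dist_zero_right, pi_norm_lt_iff hε] at hs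
  exact hs ⟨q, hq⟩

lemma forward {n : ℕ} (hn : 0 < n) (v : Fin 2 → Fin n → ℤ)
    (hv : LinearIndependent ℝ (fun j : Fin 2 => fun i : Fin n => (v j i : ℝ)))
    (hp : IsProperSub (spanTorus v)) (hfin : (relSpec1 (spanTorus v)).Finite)
    (H : ∀ (x x' : Torus n) (w w' : Fin n → ℝ), w ≠ 0 → w' ≠ 0 →
      {p : Torus n | ∃ t ∈ Set.Icc (0 : ℝ) 1, p = x + torusProj fun i => t * w i}
        ⊆ ZSet (spanTorus v) →
      {p : Torus n | ∃ t ∈ Set.Icc (0 : ℝ) 1, p = x' + torusProj fun i => t * w' i}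
        ⊆ ZSet (spanTorus v) → ∃ c : ℝ, w' = c • w) : False := by
  have hD2 : DVal (spanTorus v) < 1 / 2 := by
    obtain ⟨x, hx, hlt⟩ := (proper_iff hn _).1 hp
    exact lt_of_le_of_lt (DVal_le hn hx) hlt
  set D := DVal (spanTorus v) with hD
  -- a coordinate that is constant on all cells
  obtain ⟨i, hi⟩ : ∃ i, ∀ m, ∀ x ∈ cell v D m, ∀ y ∈ cell v D m, x i = y i := by
    by_cases hs : ∃ m, ∃ x ∈ cell v D m, ∃ y ∈ cell v D m, x ≠ y
    · obtain ⟨m, x, hx, y, hy, hxy⟩ := hs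
      obtain ⟨i, hi⟩ := cell_coord hn v m x y hx hy
      refine ⟨i, fun m' x' hx' y' hy' => ?_⟩
      by_cases hxy' : x' = y'
      · rw [hxy']
      obtain ⟨c, hc⟩ := H _ _ (y - x) (y' - x') (sub_ne_zero.2 hxy.symm)
        (sub_ne_zero.2 (Ne.symm hxy')) (cell_seg hn v m x y hx hy) (cell_seg hn v m' x' y' hx' hy')
      have := congrFun hc i
      simp [hi] at this
      linarith
    · push Not at hs
      exact ⟨⟨0, hn⟩, fun m x hx y hy => by rw [hs m x hx y hy]⟩
  have hA := finite_coord hn v hD2 i hi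
  obtain ⟨j, hj⟩ := exists_minor v hv hp i
  -- the gap
  obtain ⟨δ, hδ, hδ2, hgap⟩ : ∃ δ > 0, D + δ ≤ 1 / 2 ∧
      ∀ d ∈ relSpec1 (spanTorus v), D ≤ d → d < D + δ → d = D := by
    have hcl : (relSpec1 (spanTorus v) \ {D}).Finite := hfin.subset Set.sdiff_subset
    have hnh : (relSpec1 (spanTorus v) \ {D})ᶜ ∈ nhds D :=
      hcl.isClosed.isOpen_compl.mem_nhds (by simp)
    obtain ⟨ε, hε, hball⟩ := Metric.mem_nhds_iff.1 hnh
    refine ⟨min ε (1 / 2 - D), lt_min hε (by linarith), by linarith [min_le_right ε (1 / 2 - D)],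
      fun d hd h1 h2 => ?_⟩
    by_contra hne
    refine hball (show d ∈ Metric.ball D ε from ?_) ⟨hd, hne⟩
    rw [Metric.mem_ball, Real.dist_eq, abs_lt]
    constructor <;> linarith [min_le_left ε (1 / 2 - D)]
  -- the two basic integer vectors
  let u : Fin n → Fin n → ℤ := fun k l => -(v 1 k) * v 0 l + v 0 k * v 1 l
  set K : ℝ := ∑ l, |(u j l : ℝ)| with hK
  have hK0 : 0 ≤ K := Finset.sum_nonneg fun _ _ => abs_nonneg _
  have hKl : ∀ l, |(u j l : ℝ)| ≤ K := fun l =>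
    Finset.single_le_sum (f := fun l => |(u j l : ℝ)|) (fun _ _ => abs_nonneg _) (Finset.mem_univ l)
  obtain ⟨s, hs, hsl⟩ := ((recur _ hA (1 / 2 - D) (by linarith)).and_eventually
    (Filter.eventually_gt_atTop (⌈K / δ⌉₊))).exists
  have hs0 : (0 : ℝ) < s := by
    have : 0 < s := by omega
    exact_mod_cast this
  have hKs : K / s < δ := by
    rw [div_lt_iff₀ hs0]
    have h1 : K / δ < s := lt_of_le_of_lt (Nat.le_ceil _) (by exact_mod_cast hsl)
    rw [div_lt_iff₀ hδ] at h1
    linarith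
  let U1 : Fin 1 → Fin n → ℤ := fun _ l => u j l + s * u i l
  have hTU : spanTorus U1 ⊆ spanTorus v := by
    intro p hp
    rw [mem_span1] at hp
    obtain ⟨t, rfl⟩ := hp
    rw [mem_span2]
    refine ⟨t * (-(v 1 j) - s * v 1 i), t * (v 0 j + s * v 0 i), ?_⟩
    congr 1
    funext l
    simp only [EE, U1, u]
    push_cast
    ring
  -- a point of T close to Z
  obtain ⟨x, hxT, hxlt⟩ : ∃ x ∈ spanTorus U1, dist x (halfPt n) < D + δ := by
    obtain ⟨p, hpU, hpe⟩ := DVal_attained hn (spanTorus_compact v) ⟨0, zero_mem_span v⟩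
    rw [mem_span2] at hpU
    obtain ⟨a, b, rfl⟩ := hpU
    have hΔ : (v 0 i * v 1 j - v 0 j * v 1 i : ℝ) ≠ 0 := by exact_mod_cast hj
    -- EE a b = α u_j + β u_i
    obtain ⟨α, β, hαβ⟩ : ∃ α β : ℝ, ∀ l, EE v a b l = α * u j l + β * u i l := by
      refine ⟨-(v 0 i * a + v 1 i * b) / (v 0 i * v 1 j - v 0 j * v 1 i),
        (v 0 j * a + v 1 j * b) / (v 0 i * v 1 j - v 0 j * v 1 i), fun l => ?_⟩
      simp only [EE, u]
      push_cast
      rw [div_mul_eq_mul_div, div_mul_eq_mul_div, ← add_div, eq_div_iff hΔ]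
      ring
    set m : ℤ := ⌊α * s - β⌋ with hm
    set t : ℝ := (β + m) / s with ht
    have hts : t * s = β + m := div_mul_cancel₀ _ hs0.ne'
    have htα : |t - α| ≤ 1 / s := by
      rw [le_div_iff₀ hs0, ← abs_of_pos hs0, ← abs_mul, sub_mul, hts]
      have h1 := Int.floor_le (α * s - β)
      have h2 := Int.lt_floor_add_one (α * s - β)
      rw [abs_le]; constructor <;> linarith
    refine ⟨torusProj (fun l => t * U1 0 l), (mem_span1 _ _).2 ⟨t, rfl⟩, ?_⟩
    have e1 : torusProj (fun l => t * (U1 0 l : ℝ)) =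
        torusProj (fun l => t * u j l + β * u i l) := by
      refine torusProj_eq_iff _ _ (fun l => m * u i l) fun l => ?_
      simp only [U1]
      push_cast
      linear_combination (u i l : ℝ) * hts
    rw [e1]
    have e2 : dist (torusProj (fun l => t * (u j l : ℝ) + β * u i l)) (torusProj (EE v a b))
        ≤ K / s := by
      rw [dist_pi_le_iff (div_nonneg hK0 hs0.le)]
      intro l
      simp only [torusProj, hαβ]
      rw [dist_eq_norm, ← AddCircle.coe_sub, AddCircle.norm_eq]
      simp only [inv_one, one_mul, mul_one]
      refine (round_le _ 0).trans ?_
      have : t * (u j l : ℝ) + β * u i l - (α * u j l + β * u i l) - ((0 : ℤ) : ℝ)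
        = (t - α) * u j l := by push_cast; ring
      rw [this, abs_mul, div_eq_mul_one_div, mul_comm K]
      exact mul_le_mul htα (hKl l) (abs_nonneg _) (by positivity)
    calc _ ≤ _ := dist_triangle _ (torusProj (EE v a b)) _
      _ < D + δ := by rw [hpe]; linarith
  have hTp : IsProperSub (spanTorus U1) := (proper_iff hn _).2 ⟨x, hxT, by linarith⟩
  have hsub : IsSubtorus 1 (spanTorus U1) := by
    refine ⟨U1, ?_, rfl⟩
    rw [linearIndependent_unique_iff]
    intro h0
    apply hTp
    intro p hp
    rw [mem_span1] at hp
    obtain ⟨t, rfl⟩ := hp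
    simp only [Set.mem_iUnion, Set.mem_ofPred_eq]
    refine ⟨i, ?_⟩
    have : (U1 0 i : ℝ) = 0 := congrFun h0 i
    simp [torusProj, this]
  have hDT : DVal (spanTorus U1) = D :=
    hgap _ ⟨_, hsub, hTp, hTU, rfl⟩ (DVal_mono hn _ hTU) (lt_of_le_of_lt (DVal_le hn hxT) hxlt)
  obtain ⟨z, hzT, hze⟩ := DVal_attained hn (spanTorus_compact U1) ⟨0, zero_mem_span U1⟩
  have hzZ : z ∈ ZSet (spanTorus v) := (mem_ZSet hn _ _).2 ⟨hTU hzT, hze.trans hDT⟩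
  have hsz := hs (z i) ⟨z, hzZ, rfl⟩
  have hzj : z j = -(s • z i) := by
    rw [mem_span1] at hzT
    obtain ⟨t, rfl⟩ := hzT
    simp only [torusProj]
    rw [← AddCircle.coe_nsmul, ← AddCircle.coe_neg]
    congr 1
    simp only [U1, u, nsmul_eq_mul]
    push_cast
    ring
  have h1 : dist (z j) ((1 / 2 : ℝ) : AddCircle (1 : ℝ)) ≤ D := by
    rw [← hDT, ← hze]
    exact dist_le_pi_dist z (halfPt n) j
  have h2 : ‖z j‖ < 1 / 2 - D := by rw [hzj, norm_neg]; exact hsz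
  have h3 := dist_triangle (0 : AddCircle (1 : ℝ)) (z j) ((1 / 2 : ℝ) : AddCircle (1 : ℝ))
  rw [dist_half_zero, dist_zero_left] at h3
  linarith

/-- **Proposition (finiteness criterion).** `𝒮₁(U)` is finite iff `Z(U)` contains two
non-parallel nondegenerate line segments. -/
theorem stmt18 (n : ℕ) (hn : 3 ≤ n) (U : Set (Torus n))
    (hU : IsSubtorus 2 U) (hUproper : IsProperSub U) :
    (relSpec1 U).Finite ↔
      ∃ (x x' : Torus n) (w w' : Fin n → ℝ),
        w ≠ 0 ∧ w' ≠ 0 ∧ (∀ c : ℝ, w' ≠ c • w) ∧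
        {p : Torus n | ∃ t ∈ Set.Icc (0 : ℝ) 1, p = x + torusProj fun i => t * w i} ⊆ ZSet U ∧
        {p : Torus n | ∃ t ∈ Set.Icc (0 : ℝ) 1, p = x' + torusProj fun i => t * w' i} ⊆ ZSet U := by
  obtain ⟨v, hv, rfl⟩ := hU
  have hn0 : 0 < n := by omega
  constructor
  · intro hfin
    by_contra hno
    refine forward hn0 v hv hUproper hfin fun x x' w w' hw hw' h1 h2 => ?_
    by_contra hc
    push Not at hc
    exact hno ⟨x, x', w, w', hw, hw', hc, h1, h2⟩
  · rintro ⟨x, x', w, w', hw, -, hww, h1, h2⟩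
    exact backward hn0 v hv hUproper x x' w w' hw hww h1 h2
end
end
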